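/- arXiv:1601.08073 — 5 statements merged into one kernel-verified Lean document; each statement's English description precedes it below -/
import Mathlib

section
/- (Existence, case (S₂)) Suppose there exist ρ₁,ρ₂,r₁,r₂ ∈ (0,∞) with ρ₁ < r₁ and ρ₂ < r₂ such that condition (I¹_{ρ₁,ρ₂}) holds and condition (I⁰_{r₁,r₂}) holds. Then the system (*) has at least one nontrivial solution in K. -/
open MeasureTheory Set

noncomputable def supNorm (w : ℝ → ℝ) : ℝ := ⨆ t : Set.Icc (0:ℝ) 1, |w t.1|

noncomputable def infOn (a b : ℝ) (w : ℝ → ℝ) : ℝ := ⨅ t : Set.Icc a b, w t.1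

/-- Membership in the cone `K ⊆ C[0,1] × C[0,1]`. -/
def inCone (a₁ b₁ c₁ a₂ b₂ c₂ : ℝ) (u v : ℝ → ℝ) : Prop :=
  ContinuousOn u (Set.Icc 0 1) ∧ ContinuousOn v (Set.Icc 0 1) ∧
    c₁ * supNorm u ≤ infOn a₁ b₁ u ∧ c₂ * supNorm v ≤ infOn a₂ b₂ v

/-- `(u, v)` solves the system of Hammerstein integral equations (*). -/
def isSolution (k₁ k₂ : ℝ → ℝ → ℝ) (f₁ f₂ : ℝ → ℝ → ℝ → ℝ) (u v : ℝ → ℝ) : Prop :=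
  (∀ t ∈ Set.Icc (0:ℝ) 1, u t = ∫ s in (0:ℝ)..1, k₁ t s * f₁ s (u s) (v s)) ∧
    (∀ t ∈ Set.Icc (0:ℝ) 1, v t = ∫ s in (0:ℝ)..1, k₂ t s * f₂ s (u s) (v s))

/-- `(u, v)` is a nontrivial solution of (*) lying in the cone. -/
def nontrivialSolution (k₁ k₂ : ℝ → ℝ → ℝ) (f₁ f₂ : ℝ → ℝ → ℝ → ℝ)
    (a₁ b₁ c₁ a₂ b₂ c₂ : ℝ) (u v : ℝ → ℝ) : Prop :=
  inCone a₁ b₁ c₁ a₂ b₂ c₂ u v ∧ isSolution k₁ k₂ f₁ f₂ u v ∧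
    0 < max (supNorm u) (supNorm v)

/-- Condition `(I¹_{ρ₁,ρ₂})`. -/
def condI1 (f₁ f₂ : ℝ → ℝ → ℝ → ℝ) (m₁ m₂ ρ₁ ρ₂ : ℝ) : Prop :=
  ∀ t ∈ Set.Icc (0:ℝ) 1, ∀ x ∈ Set.Icc (-ρ₁) ρ₁, ∀ y ∈ Set.Icc (-ρ₂) ρ₂,
    f₁ t x y < m₁ * ρ₁ ∧ f₂ t x y < m₂ * ρ₂

/-- Condition `(I⁰_{ρ₁,ρ₂})`. -/
def condI0 (f₁ f₂ : ℝ → ℝ → ℝ → ℝ) (a₁ b₁ c₁ a₂ b₂ c₂ M₁ M₂ ρ₁ ρ₂ : ℝ) : Prop :=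
  (∀ t ∈ Set.Icc a₁ b₁, ∀ x ∈ Set.Icc ρ₁ (ρ₁ / c₁), ∀ y ∈ Set.Icc (-(ρ₂ / c₂)) (ρ₂ / c₂),
      M₁ * ρ₁ < f₁ t x y) ∧
    (∀ t ∈ Set.Icc a₂ b₂, ∀ x ∈ Set.Icc (-(ρ₁ / c₁)) (ρ₁ / c₁), ∀ y ∈ Set.Icc ρ₂ (ρ₂ / c₂),
      M₂ * ρ₂ < f₂ t x y)

/-- Condition `(I⁰_{ρ₁,ρ₂})⋆`. -/
def condI0star (f₁ f₂ : ℝ → ℝ → ℝ → ℝ) (a₁ b₁ c₁ a₂ b₂ c₂ M₁ M₂ ρ₁ ρ₂ : ℝ) : Prop :=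
  (∀ t ∈ Set.Icc a₁ b₁, ∀ x ∈ Set.Icc 0 (ρ₁ / c₁), ∀ y ∈ Set.Icc (-(ρ₂ / c₂)) (ρ₂ / c₂),
      M₁ * ρ₁ < f₁ t x y) ∨
    (∀ t ∈ Set.Icc a₂ b₂, ∀ x ∈ Set.Icc (-(ρ₁ / c₁)) (ρ₁ / c₁), ∀ y ∈ Set.Icc 0 (ρ₂ / c₂),
      M₂ * ρ₂ < f₂ t x y)


theorem det_one_add_smul_poly {n : Type*} [Fintype n] [DecidableEq n]
    (A : EuclideanSpace ℝ n →L[ℝ] EuclideanSpace ℝ n) :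
    ∃ q : Polynomial ℝ, q.natDegree ≤ Fintype.card n ∧
      ∀ t : ℝ, (ContinuousLinearMap.id ℝ (EuclideanSpace ℝ n) + t • A).det = q.eval t := by
  classical
  let b := (EuclideanSpace.basisFun n ℝ).toBasis
  let M := LinearMap.toMatrix b b A.toLinearMap
  refine ⟨Matrix.det ((Polynomial.X : Polynomial ℝ) • M.map Polynomial.C
    + (1 : Matrix n n ℝ).map Polynomial.C), Polynomial.natDegree_det_X_add_C_le M 1, fun t => ?_⟩
  have h1 : (ContinuousLinearMap.id ℝ (EuclideanSpace ℝ n) + t • A).det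
      = Matrix.det (1 + t • M) := by
    rw [ContinuousLinearMap.det, ← LinearMap.det_toMatrix b]
    congr 1
    simp [M]
  rw [h1, ← Polynomial.coe_evalRingHom, RingHom.map_det]
  congr 1
  ext i j
  simp [Matrix.one_apply, add_comm]
  split_ifs <;> simp [mul_comm]

theorem det_one_add_pos {E : Type*} [NormedAddCommGroup E] [NormedSpace ℝ E] [FiniteDimensional ℝ E]
    (A : E →L[ℝ] E) (hA : ‖A‖ < 1) : 0 < (ContinuousLinearMap.id ℝ E + A).det := by
  have hne : ∀ s ∈ Icc (0:ℝ) 1, (ContinuousLinearMap.id ℝ E + s • A).det ≠ 0 := by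
    intro s hs h0
    have := LinearMap.bot_lt_ker_of_det_eq_zero h0
    obtain ⟨x, hx, hx0⟩ := (Submodule.ne_bot_iff _).1 this.ne'
    have hx' : x + s • A x = 0 := by simpa using hx
    have h1 : ‖x‖ = s * ‖A x‖ := by
      have h4 := congrArg norm (eq_neg_of_add_eq_zero_left hx')
      rwa [norm_neg, norm_smul, Real.norm_eq_abs, abs_of_nonneg hs.1] at h4
    have h2 := A.le_opNorm x
    have h3 : 0 < ‖x‖ := norm_pos_iff.2 hx0
    nlinarith [hs.1, hs.2, norm_nonneg (A x), norm_nonneg A]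
  have hc : ContinuousOn (fun s : ℝ => (ContinuousLinearMap.id ℝ E + s • A).det) (Icc 0 1) := by
    apply Continuous.continuousOn
    exact ContinuousLinearMap.continuous_det.comp (by fun_prop)
  by_contra hneg
  push Not at hneg
  have := intermediate_value_Icc' (zero_le_one' ℝ) hc
  have h0 : (0:ℝ) ∈ Icc ((ContinuousLinearMap.id ℝ E + (1:ℝ) • A).det)
      ((ContinuousLinearMap.id ℝ E + (0:ℝ) • A).det) := by
    constructor
    · simpa using hneg
    · simp [ContinuousLinearMap.det]
  obtain ⟨s, hs, hs0⟩ := this h0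
  exact hne s hs hs0


theorem no_retract {n : Type*} [Fintype n] (g : EuclideanSpace ℝ n → EuclideanSpace ℝ n)
    (U : Set (EuclideanSpace ℝ n)) (hU : IsOpen U) (hBU : Metric.closedBall 0 1 ⊆ U)
    (hg : ContDiffOn ℝ 1 g U) (hg0 : ∀ x, ‖x‖ = 1 → g x = 0)
    (hr : ∀ x, ‖x‖ ≤ 1 → ‖x + g x‖ = 1) : False := by
  classical
  have hder : ∀ x ∈ U, HasFDerivAt g (fderiv ℝ g x) x := fun x hx =>
    ((hg.differentiableOn (by norm_num)).differentiableAt (hU.mem_nhds hx)).hasFDerivAt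
  have hcont : ContinuousOn (fderiv ℝ g) U := hg.continuousOn_fderiv_of_isOpen hU (by norm_num)
  have hcb : IsCompact (Metric.closedBall (0:(EuclideanSpace ℝ n)) 1) := isCompact_closedBall 0 1
  obtain ⟨C0, hC0⟩ := hcb.exists_bound_of_continuousOn (hcont.mono hBU)
  set C : NNReal := (max C0 1).toNNReal with hC
  have hCr : (C:ℝ) = max C0 1 := Real.coe_toNNReal _ (by positivity)
  have hCpos : (0:ℝ) < C := by rw [hCr]; positivity
  have hCb : ∀ x ∈ Metric.closedBall (0:(EuclideanSpace ℝ n)) 1, ‖fderiv ℝ g x‖ ≤ C := fun x hx => by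
    rw [hCr]; exact (hC0 x hx).trans (le_max_left _ _)
  have hlip : LipschitzOnWith C g (Metric.closedBall (0:(EuclideanSpace ℝ n)) 1) := by
    refine (convex_closedBall (0:(EuclideanSpace ℝ n)) 1).lipschitzOnWith_of_nnnorm_hasFDerivWithin_le
      (f' := fderiv ℝ g) (fun x hx => (hder x (hBU hx)).hasFDerivWithinAt) (fun x hx => ?_)
    exact_mod_cast hCb x hx
  set B := Metric.ball (0:(EuclideanSpace ℝ n)) 1 with hB
  have hBc : B ⊆ Metric.closedBall (0:(EuclideanSpace ℝ n)) 1 := Metric.ball_subset_closedBall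
  set P : ℝ → ℝ := fun t => ∫ x in B, (ContinuousLinearMap.id ℝ (EuclideanSpace ℝ n) + t • fderiv ℝ g x).det with hP
  -- small t
  have hsmall : ∀ t : ℝ, 0 < t → t < 1 → t * C < 1 → P t = volume.real B := by
    intro t ht ht1 htC
    set F : (EuclideanSpace ℝ n) → (EuclideanSpace ℝ n) := fun x => x + t • g x with hF
    have happ : ∀ s ⊆ Metric.closedBall (0:(EuclideanSpace ℝ n)) 1, ApproximatesLinearOn F
        ((ContinuousLinearEquiv.refl ℝ (EuclideanSpace ℝ n) : (EuclideanSpace ℝ n) ≃L[ℝ] (EuclideanSpace ℝ n)) : (EuclideanSpace ℝ n) →L[ℝ] (EuclideanSpace ℝ n)) s (t.toNNReal * C) := by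
      intro s hs x hx y hy
      have h := hlip.dist_le_mul x (hs hx) y (hs hy)
      rw [dist_eq_norm, dist_eq_norm] at h
      have : F x - F y - ((ContinuousLinearEquiv.refl ℝ (EuclideanSpace ℝ n) : (EuclideanSpace ℝ n) ≃L[ℝ] (EuclideanSpace ℝ n)) : (EuclideanSpace ℝ n) →L[ℝ] (EuclideanSpace ℝ n)) (x - y)
          = t • (g x - g y) := by
        simp only [hF, ContinuousLinearEquiv.coe_coe, ContinuousLinearEquiv.refl_apply, smul_sub]
        abel
      rw [this, norm_smul, Real.norm_eq_abs, abs_of_pos ht]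
      push_cast
      rw [Real.coe_toNNReal t ht.le, mul_assoc]
      exact mul_le_mul_of_nonneg_left h ht.le
    have hc : Subsingleton (EuclideanSpace ℝ n) ∨ (t.toNNReal * C) <
        ‖((ContinuousLinearEquiv.refl ℝ (EuclideanSpace ℝ n)).symm : (EuclideanSpace ℝ n) →L[ℝ] (EuclideanSpace ℝ n))‖₊⁻¹ := by
      rcases subsingleton_or_nontrivial (EuclideanSpace ℝ n) with h | h
      · exact Or.inl h
      · right
        have : ‖((ContinuousLinearEquiv.refl ℝ (EuclideanSpace ℝ n)).symm : (EuclideanSpace ℝ n) →L[ℝ] (EuclideanSpace ℝ n))‖₊ = 1 := by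
          ext; simp
        rw [this, inv_one, ← NNReal.coe_lt_coe]
        push_cast
        rwa [Real.coe_toNNReal t ht.le]
    have hinj : InjOn F (Metric.closedBall (0:(EuclideanSpace ℝ n)) 1) := (happ _ Subset.rfl).injOn hc
    have hopen : IsOpen (F '' B) := by
      refine (happ B hBc).open_image
        (ContinuousLinearEquiv.toNonlinearRightInverse (ContinuousLinearEquiv.refl ℝ (EuclideanSpace ℝ n)))
        Metric.isOpen_ball ?_
      exact hc
    have hnorm : ∀ x ∈ B, F x ∈ B := by
      intro x hx
      have hx1 : ‖x‖ < 1 := by simpa [hB] using hx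
      have : F x = (1 - t) • x + t • (x + g x) := by
        simp only [hF]; module
      rw [hB, mem_ball_zero_iff, this]
      calc _ ≤ ‖(1 - t) • x‖ + ‖t • (x + g x)‖ := norm_add_le _ _
        _ = (1 - t) * ‖x‖ + t * 1 := by
          rw [norm_smul, norm_smul, hr x hx1.le, Real.norm_eq_abs, Real.norm_eq_abs,
            abs_of_pos ht, abs_of_pos (by linarith)]
        _ < 1 := by nlinarith
    have hFc : ContinuousOn F (Metric.closedBall (0:(EuclideanSpace ℝ n)) 1) := by
      have := hlip.continuousOn
      exact continuousOn_id.add (this.const_smul t)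
    have himg : F '' B = B := by
      apply Subset.antisymm
      · rintro _ ⟨x, hx, rfl⟩; exact hnorm x hx
      have hV : IsOpen (F '' Metric.closedBall (0:(EuclideanSpace ℝ n)) 1)ᶜ :=
        (hcb.image_of_continuousOn hFc).isClosed.isOpen_compl
      have hpre : IsPreconnected B := (convex_ball (0:(EuclideanSpace ℝ n)) 1).isPreconnected
      refine hpre.subset_left_of_subset_union hopen hV ?_ ?_ ?_
      · rw [disjoint_compl_right_iff_subset]
        exact image_mono hBc
      · intro y hy
        by_cases h : y ∈ F '' Metric.closedBall (0:(EuclideanSpace ℝ n)) 1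
        · left
          obtain ⟨x, hx, rfl⟩ := h
          have hx1 : ‖x‖ ≤ 1 := by simpa using hx
          rcases hx1.lt_or_eq with h | h
          · exact ⟨x, by simpa [hB] using h, rfl⟩
          · exfalso
            have : F x = x := by simp [hF, hg0 x h]
            rw [this, hB, mem_ball_zero_iff] at hy
            linarith
        · right; exact h
      · exact ⟨F 0, hnorm 0 (by simp [hB]), mem_image_of_mem _ (by simp [hB])⟩
    have hFd : ∀ x ∈ B, HasFDerivWithinAt F (ContinuousLinearMap.id ℝ (EuclideanSpace ℝ n) + t • fderiv ℝ g x) B x := by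
      intro x hx
      have := (hder x (hBU (hBc hx)))
      exact ((hasFDerivAt_id x).add (this.const_smul t)).hasFDerivWithinAt
    have hcv := integral_image_eq_integral_abs_det_fderiv_smul volume
      Metric.isOpen_ball.measurableSet hFd (hinj.mono hBc) (fun _ => (1:ℝ))
    rw [himg] at hcv
    simp only [setIntegral_const, smul_eq_mul, mul_one] at hcv
    rw [hcv, hP]
    refine setIntegral_congr_fun Metric.isOpen_ball.measurableSet (fun x hx => ?_)
    refine (abs_of_pos (det_one_add_pos _ ?_)).symm
    rw [norm_smul, Real.norm_eq_abs, abs_of_pos ht]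
    exact (mul_le_mul_of_nonneg_left (hCb x (hBc hx)) ht.le).trans_lt htC
  have hintg : ∀ t : ℝ, IntegrableOn
      (fun x => (ContinuousLinearMap.id ℝ (EuclideanSpace ℝ n) + t • fderiv ℝ g x).det) B := by
    intro t
    refine IntegrableOn.mono_set (ContinuousOn.integrableOn_compact hcb ?_) hBc
    exact ContinuousLinearMap.continuous_det.comp_continuousOn
      (continuousOn_const.add ((hcont.mono hBU).const_smul t))
  -- t = 1
  have hone : P 1 = volume.real B := by
    set N := Fintype.card n + 1
    set v : Fin N → ℝ := fun i => ((i:ℝ) + 1) / ((N + 1) * (C + 1)) with hv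
    have hvpos : ∀ i, 0 < v i := fun i => by simp only [hv]; positivity
    have hvle : ∀ i, v i * (C + 1) < 1 := fun i => by
      simp only [hv]
      have : (i:ℝ) < N := by exact_mod_cast i.2
      rw [div_mul_eq_mul_div, div_lt_one (by positivity)]
      nlinarith
    have hvinj : Set.InjOn v (Finset.univ : Finset (Fin N)) := by
      intro i _ j _ hij
      simp only [hv] at hij
      rw [div_left_inj' (by positivity)] at hij
      have : (i:ℝ) = j := by linarith
      exact Fin.ext (by exact_mod_cast this)
    set w : Fin N → ℝ := fun i => (Lagrange.basis Finset.univ v i).eval 1 with hw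
    have hwsum : ∑ i, w i = 1 := by
      have := Lagrange.sum_basis hvinj ⟨⟨0, by omega⟩, Finset.mem_univ _⟩
      have h2 := congrArg (Polynomial.eval 1) this
      simpa [Polynomial.eval_finsetSum] using h2
    have hq : ∀ x, (ContinuousLinearMap.id ℝ (EuclideanSpace ℝ n) + (1:ℝ) • fderiv ℝ g x).det
        = ∑ i, w i * (ContinuousLinearMap.id ℝ (EuclideanSpace ℝ n) + v i • fderiv ℝ g x).det := by
      intro x
      obtain ⟨q, hqd, hq⟩ := det_one_add_smul_poly (fderiv ℝ g x)
      have hdeg : q.degree < (Finset.univ : Finset (Fin N)).card := by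
        rw [Finset.card_fin]
        refine (Polynomial.degree_le_natDegree).trans_lt ?_
        exact_mod_cast Nat.lt_succ_of_le hqd
      have := Lagrange.eq_interpolate hvinj hdeg
      rw [hq 1, this, Lagrange.interpolate_apply, Polynomial.eval_finsetSum]
      refine Finset.sum_congr rfl (fun i _ => ?_)
      simp [hq, hw, mul_comm]
    have : P 1 = ∑ i, w i * P (v i) := by
      simp only [hP]
      rw [setIntegral_congr_fun Metric.isOpen_ball.measurableSet (fun x _ => hq x),
        integral_finsetSum _ (fun i _ => (hintg (v i)).const_mul (w i))]
      exact Finset.sum_congr rfl (fun i _ => integral_const_mul _ _)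
    rw [this]
    have h3 : ∀ i, P (v i) = volume.real B := fun i => by
      have h1 := hvpos i
      have h2 := hvle i
      exact hsmall _ h1 (by nlinarith) (by nlinarith)
    simp only [h3]
    rw [← Finset.sum_mul, hwsum, one_mul]
  have hzero : P 1 = 0 := by
    simp only [hP]
    refine setIntegral_eq_zero_of_forall_eq_zero (fun x hx => ?_)
    by_contra hdet
    set A : (EuclideanSpace ℝ n) →L[ℝ] (EuclideanSpace ℝ n) := ContinuousLinearMap.id ℝ (EuclideanSpace ℝ n) + (1:ℝ) • fderiv ℝ g x with hA
    have hsurj : Function.Surjective A := by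
      have hu : IsUnit (LinearMap.det (A : (EuclideanSpace ℝ n) →ₗ[ℝ] (EuclideanSpace ℝ n))) := isUnit_iff_ne_zero.2 hdet
      have := LinearMap.isUnit_iff_range_eq_top (A : (EuclideanSpace ℝ n) →ₗ[ℝ] (EuclideanSpace ℝ n)) |>.1
        ((LinearMap.isUnit_iff_isUnit_det _).2 hu)
      exact LinearMap.range_eq_top.1 this
    obtain ⟨h, hh⟩ := hsurj (x + g x)
    have hd : HasFDerivAt (fun y => y + g y) A x := by
      have := (hasFDerivAt_id x).add (hder x (hBU (hBc hx)))
      rw [hA, one_smul]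
      exact this
    have hd2 := hd.norm_sq
    have hconst : (fun y => ‖y + g y‖ ^ 2) =ᶠ[nhds x] fun _ => (1:ℝ) := by
      filter_upwards [Metric.isOpen_ball.mem_nhds hx] with y hy
      rw [hr y (by simpa using hBc hy), one_pow]
    have h0 := (hd2.congr_of_eventuallyEq hconst.symm).unique (hasFDerivAt_const (1:ℝ) x)
    have h1 := congrArg (fun l => l h) h0
    have h2 : (2:ℝ) * inner ℝ (x + g x) (A h) = 0 := by
      simp at h1
      rw [inner_add_left]
      linarith
    rw [hh, real_inner_self_eq_norm_sq, hr x (by simpa using hBc hx)] at h2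
    norm_num at h2
  have hpos : 0 < volume.real B := by
    rw [Measure.real, ENNReal.toReal_pos_iff]
    exact ⟨Metric.measure_ball_pos _ _ one_pos, measure_ball_lt_top⟩
  linarith


theorem brouwer_smooth {n : Type*} [Fintype n] (p : EuclideanSpace ℝ n → EuclideanSpace ℝ n)
    (hp : ContDiff ℝ 1 p) (hp1 : ∀ x, ‖p x‖ < 1) : ∃ x, ‖x‖ ≤ 1 ∧ p x = x := by
  by_contra hcon
  push Not at hcon
  set a : EuclideanSpace ℝ n → ℝ := fun x => ‖x - p x‖ ^ 2 with ha
  set b : EuclideanSpace ℝ n → ℝ := fun x => inner ℝ x (x - p x) with hb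
  set d : EuclideanSpace ℝ n → ℝ := fun x => b x ^ 2 + a x * (1 - ‖x‖ ^ 2) with hd
  have hac : ContDiff ℝ 1 a := (contDiff_id.sub hp).norm_sq ℝ
  have hbc : ContDiff ℝ 1 b := contDiff_id.inner ℝ (contDiff_id.sub hp)
  have hdc : ContDiff ℝ 1 d := (hbc.pow 2).add (hac.mul (contDiff_const.sub (contDiff_norm_sq ℝ)))
  have hapos : ∀ x, ‖x‖ ≤ 1 → 0 < a x := fun x hx => by
    have : x - p x ≠ 0 := sub_ne_zero.2 (hcon x hx).symm
    simp only [ha]; positivity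
  have hbpos : ∀ x, ‖x‖ = 1 → 0 < b x := fun x hx => by
    simp only [hb, inner_sub_right, real_inner_self_eq_norm_sq, hx]
    have := real_inner_le_norm x (p x)
    rw [hx] at this
    linarith [hp1 x]
  have hdpos : ∀ x, ‖x‖ ≤ 1 → 0 < d x := fun x hx => by
    rcases hx.lt_or_eq with h | h
    · have : 0 < 1 - ‖x‖ ^ 2 := by nlinarith [norm_nonneg x]
      have := hapos x hx
      simp only [hd]; positivity
    · have := hbpos x h
      simp only [hd, h]; norm_num; positivity
  set l : EuclideanSpace ℝ n → ℝ := fun x => (- b x + Real.sqrt (d x)) / a x with hl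
  refine no_retract (fun x => l x • (x - p x)) ({x | 0 < d x} ∩ {x | 0 < a x}) ?_ ?_ ?_ ?_ ?_
  · exact (isOpen_lt continuous_const hdc.continuous).inter
      (isOpen_lt continuous_const hac.continuous)
  · intro x hx
    have hx1 : ‖x‖ ≤ 1 := by simpa using hx
    exact ⟨hdpos x hx1, hapos x hx1⟩
  · refine ContDiffOn.smul (ContDiffOn.div (hbc.contDiffOn.neg.add
      (hdc.contDiffOn.sqrt fun x hx => hx.1.ne')) hac.contDiffOn fun x hx => ne_of_gt hx.2)
      (contDiff_id.sub hp).contDiffOn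
  · intro x hx
    have : d x = b x ^ 2 := by simp [hd, hx]
    simp only [hl, this, Real.sqrt_sq (hbpos x hx).le]
    simp
  · intro x hx
    have hsq : ‖x + l x • (x - p x)‖ ^ 2 = 1 := by
      rw [norm_add_sq_real, inner_smul_right, norm_smul, mul_pow, Real.norm_eq_abs, sq_abs]
      change ‖x‖ ^ 2 + 2 * (l x * b x) + l x ^ 2 * a x = 1
      have h1 := Real.sq_sqrt (hdpos x hx).le
      have ha' := (hapos x hx).ne'
      have h2 : l x * a x = - b x + Real.sqrt (d x) := by
        simp only [hl]; field_simp
      have h3 : (l x * a x + b x) ^ 2 = d x := by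
        rw [h2, neg_add_eq_sub, sub_add_cancel, h1]
      have h4 : a x * (‖x‖ ^ 2 + 2 * (l x * b x) + l x ^ 2 * a x - 1) = 0 := by
        have h5 : d x = b x ^ 2 + a x * (1 - ‖x‖ ^ 2) := rfl
        rw [h5] at h3
        linarith
      rcases mul_eq_zero.1 h4 with h | h
      · exact absurd h ha'
      · linarith
    have := norm_nonneg (x + l x • (x - p x))
    nlinarith

theorem brouwer_ball {n : Type*} [Fintype n] (f : EuclideanSpace ℝ n → EuclideanSpace ℝ n)
    (hf : Continuous f) (hf1 : ∀ x, ‖f x‖ ≤ 1) : ∃ x, ‖x‖ ≤ 1 ∧ f x = x := by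
  by_contra hcon
  push Not at hcon
  obtain ⟨x0, hx0, hmin⟩ := (isCompact_closedBall (0:EuclideanSpace ℝ n) 1).exists_isMinOn
    ⟨0, by simp⟩ (f := fun x => ‖f x - x‖) (by fun_prop)
  set δ := ‖f x0 - x0‖ with hδ
  have hδpos : 0 < δ := norm_pos_iff.2 (sub_ne_zero.2 (hcon x0 (by simpa using hx0)))
  obtain ⟨q, hqc, hq, -⟩ := hf.exists_contDiff_approx 1 (ε := fun _ => δ / 2) continuous_const
    (fun _ => by positivity)
  have hqn : ∀ x, ‖q x‖ < 1 + δ / 2 := fun x => by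
    have h1 := hq x
    rw [dist_eq_norm] at h1
    have h2 := norm_le_norm_add_norm_sub' (q x) (f x)
    linarith [hf1 x]
  obtain ⟨x, hx, hpx⟩ := brouwer_smooth (fun x => (1 + δ / 2)⁻¹ • q x) (hqc.const_smul _) (fun x => by
    rw [norm_smul, Real.norm_eq_abs, abs_of_pos (by positivity), inv_mul_lt_iff₀ (by positivity)]
    simpa using hqn x)
  have h1 : q x = (1 + δ / 2) • x := by
    have := congrArg (fun z => (1 + δ / 2) • z) hpx
    rw [← this, smul_smul, mul_inv_cancel₀ (by positivity), one_smul]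
  have h2 : δ ≤ ‖f x - x‖ := hmin (by simpa using hx)
  have h3 : f x - x = (f x - q x) + (δ / 2) • x := by rw [h1]; module
  have h4 := norm_add_le (f x - q x) ((δ / 2) • x)
  rw [← h3, norm_smul, Real.norm_eq_abs, abs_of_pos (by positivity)] at h4
  have h5 := hq x
  rw [dist_comm, dist_eq_norm] at h5
  nlinarith


/-- a continuous retraction of the space on the standard simplex -/
theorem simplex_retract (ι : Type*) [Fintype ι] [Nonempty ι] :
    ∃ W : EuclideanSpace ℝ ι → ι → ℝ, Continuous W ∧ (∀ x, W x ∈ stdSimplex ℝ ι) ∧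
      ∀ x : EuclideanSpace ℝ ι, (fun i => x i) ∈ stdSimplex ℝ ι → W x = fun i => x i := by
  set V : EuclideanSpace ℝ ι → ι → ℝ := fun x i =>
    max (x i) 0 + max (1 - ∑ j, max (x j) 0) 0 / Fintype.card ι with hV
  have hc : (0:ℝ) < Fintype.card ι := by exact_mod_cast Fintype.card_pos
  have hVc : ∀ i, Continuous fun x => V x i := fun i => by
    simp only [hV]
    fun_prop
  have hVnn : ∀ x i, 0 ≤ V x i := fun x i => by simp only [hV]; positivity
  have hVs : ∀ x, ∑ i, V x i = ∑ j, max (x j) 0 + max (1 - ∑ j, max (x j) 0) 0 := fun x => by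
    simp only [hV, Finset.sum_add_distrib, Finset.sum_const, Finset.card_univ, nsmul_eq_mul]
    field_simp
  have hVpos : ∀ x, 1 ≤ ∑ i, V x i := fun x => by
    rw [hVs]
    have := le_max_left (1 - ∑ j, max (x j) 0) 0
    linarith
  refine ⟨fun x i => V x i / ∑ j, V x j, ?_, ?_, ?_⟩
  · refine continuous_pi fun i => (hVc i).div (continuous_finsetSum _ fun j _ => hVc j) ?_
    intro x; linarith [hVpos x]
  · intro x
    refine ⟨fun i => div_nonneg (hVnn x i) (by linarith [hVpos x]), ?_⟩
    rw [← Finset.sum_div, div_self (by linarith [hVpos x])]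
  · intro x hx
    have h1 : ∀ i, max (x i) 0 = x i := fun i => max_eq_left (hx.1 i)
    have h2 : ∑ j, x j = 1 := hx.2
    have h3 : ∀ i, V x i = x i := fun i => by simp [hV, h1, h2]
    funext i
    simp [h3, h2]

theorem schauder_approx {E : Type*} [NormedAddCommGroup E] [NormedSpace ℝ E] {C : Set E}
    (hC : Convex ℝ C) (hne : C.Nonempty) (H : E → E) (hH : ContinuousOn H C) (hm : MapsTo H C C)
    (htb : TotallyBounded (H '' C)) {ε : ℝ} (hε : 0 < ε) : ∃ x ∈ C, ‖H x - x‖ ≤ ε := by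
  classical
  obtain ⟨t, hts, htf, hcov⟩ := totallyBounded_iff_subset.1 htb _ (Metric.dist_mem_uniformity hε)
  have := htf.fintype
  have hne' : Nonempty t := by
    obtain ⟨x, hx⟩ := hne
    have := hcov (mem_image_of_mem H hx)
    simp only [mem_iUnion] at this
    obtain ⟨y, hy, _⟩ := this
    exact ⟨⟨y, hy⟩⟩
  have htC : ∀ y : t, (y:E) ∈ C := fun y => by
    obtain ⟨x, hx, h⟩ := hts y.2
    rw [← h]; exact hm hx
  obtain ⟨W, hWc, hWs, hWid⟩ := simplex_retract t
  set φ : t → E → ℝ := fun y z => max (ε - ‖z - y‖) 0 with hφ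
  have hφc : ∀ y, Continuous (φ y) := fun y => by simp only [hφ]; fun_prop
  have hφn : ∀ y z, 0 ≤ φ y z := fun y z => le_max_right _ _
  have hφpos : ∀ x ∈ C, 0 < ∑ y, φ y (H x) := by
    intro x hx
    have := hcov (mem_image_of_mem H hx)
    simp only [mem_iUnion] at this
    obtain ⟨y, hy, h⟩ := this
    refine Finset.sum_pos' (fun i _ => hφn _ _) ⟨⟨y, hy⟩, Finset.mem_univ _, ?_⟩
    simp only [hφ]
    have h' : dist (H x) y < ε := h
    rw [dist_eq_norm] at h'
    exact lt_max_of_lt_left (by linarith)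
  set S : EuclideanSpace ℝ t → E := fun x => ∑ y : t, W x y • (y:E) with hS
  have hSC : ∀ x, S x ∈ C := fun x =>
    hC.sum_mem (fun y _ => (hWs x).1 y) (hWs x).2 (fun y _ => htC y)
  have hSc : Continuous S := by
    refine continuous_finsetSum _ fun y _ => ?_
    exact ((continuous_apply y).comp hWc).smul continuous_const
  have hHS : Continuous fun x => H (S x) := by
    rw [← continuousOn_univ]
    exact hH.comp hSc.continuousOn (fun x _ => hSC x)
  set f : EuclideanSpace ℝ t → EuclideanSpace ℝ t := fun x =>
    WithLp.toLp 2 (fun y => φ y (H (S x)) / ∑ z, φ z (H (S x))) with hf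
  have hfc : Continuous f := by
    refine (PiLp.continuous_toLp 2 _).comp (continuous_pi fun y => ?_)
    refine ((hφc y).comp hHS).div (continuous_finsetSum _ fun z _ => (hφc z).comp hHS) ?_
    intro x; exact (hφpos _ (hSC x)).ne'
  have hfs : ∀ x, (fun i => f x i) ∈ stdSimplex ℝ t := fun x => by
    have h := hφpos _ (hSC x)
    refine ⟨fun i => div_nonneg (hφn _ _) h.le, ?_⟩
    simp only [hf]
    rw [← Finset.sum_div, div_self h.ne']
  have hfn : ∀ x, ‖f x‖ ≤ 1 := fun x => by
    rw [EuclideanSpace.norm_eq, Real.sqrt_le_one]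
    have hs := hfs x
    rw [← hs.2]
    refine Finset.sum_le_sum fun i _ => ?_
    have h0 : 0 ≤ f x i := hs.1 i
    have h1 : f x i ≤ 1 := by
      rw [← hs.2]
      exact Finset.single_le_sum (f := fun i => f x i) (fun i _ => hs.1 i) (Finset.mem_univ i)
    rw [Real.norm_eq_abs, sq_abs]
    nlinarith
  obtain ⟨x, -, hx⟩ := brouwer_ball f hfc hfn
  have hxs : (fun i => x i) ∈ stdSimplex ℝ t := by
    have := hfs x
    rwa [hx] at this
  have hWx := hWid x hxs
  refine ⟨S x, hSC x, ?_⟩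
  have h1 : H (S x) - S x = ∑ y : t, x y • (H (S x) - (y:E)) := by
    simp only [smul_sub, Finset.sum_sub_distrib, ← Finset.sum_smul]
    have : ∑ y, x y = 1 := hxs.2
    rw [this, one_smul]
    simp only [hS, hWx]
  rw [h1]
  calc _ ≤ ∑ y : t, ‖x y • (H (S x) - (y:E))‖ := norm_sum_le _ _
    _ ≤ ∑ y : t, x y * ε := by
      refine Finset.sum_le_sum fun y _ => ?_
      have h0 : 0 ≤ x y := hxs.1 y
      rw [norm_smul, Real.norm_eq_abs, abs_of_nonneg h0]
      rcases h0.eq_or_lt with h | h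
      · rw [← h]; simp
      · refine mul_le_mul_of_nonneg_left ?_ h0
        by_contra hlt
        push Not at hlt
        have h2 : f x y = 0 := by
          simp only [hf, hφ]
          rw [max_eq_right (by linarith), zero_div]
        rw [hx] at h2
        linarith
    _ = ε := by
      rw [← Finset.sum_mul]
      have : ∑ y, x y = 1 := hxs.2
      rw [this, one_mul]

theorem schauder {E : Type*} [NormedAddCommGroup E] [NormedSpace ℝ E] {C Q : Set E}
    (hC : Convex ℝ C) (hcl : IsClosed C) (hne : C.Nonempty) (H : E → E) (hH : ContinuousOn H C)
    (hm : MapsTo H C C) (hQ : IsCompact Q) (hmQ : MapsTo H C Q) : ∃ x ∈ C, H x = x := by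
  have htb : TotallyBounded (H '' C) := hQ.totallyBounded.subset hmQ.image_subset
  have h : ∀ k : ℕ, ∃ x ∈ C, ‖H x - x‖ ≤ 1 / ((k:ℝ) + 1) := fun k =>
    schauder_approx hC hne H hH hm htb (by positivity)
  choose x hx hxe using h
  obtain ⟨y, hy, σ, hσ, hlim⟩ := hQ.tendsto_subseq (fun k => hmQ (hx k))
  have hz : Filter.Tendsto (fun k => H (x k) - x k) Filter.atTop (nhds 0) :=
    squeeze_zero_norm hxe tendsto_one_div_add_atTop_nhds_zero_nat
  have hxl : Filter.Tendsto (fun k => x (σ k)) Filter.atTop (nhds y) := by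
    have := hlim.sub (hz.comp hσ.tendsto_atTop)
    simpa [Function.comp_def] using this
  have hyC : y ∈ C := hcl.mem_of_tendsto hxl (Filter.Eventually.of_forall fun k => hx _)
  have h2 : Filter.Tendsto (fun k => H (x (σ k))) Filter.atTop (nhds (H y)) :=
    (hH y hyC).tendsto.comp (tendsto_nhdsWithin_iff.2
      ⟨hxl, Filter.Eventually.of_forall fun k => hx _⟩)
  exact ⟨y, hyC, tendsto_nhds_unique h2 hlim⟩


theorem abstract_S2 {S : Type*} [TopologicalSpace S] [CompactSpace S] [Nonempty S]
    (J₁ J₂ : Set S) (hJ₁ : IsCompact J₁) (hJ₂ : IsCompact J₂)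
    (hJ₁n : J₁.Nonempty) (hJ₂n : J₂.Nonempty) (c₁ c₂ : ℝ)
    (hc₁ : 0 < c₁) (hc₂ : 0 < c₂) (hc₁' : c₁ ≤ 1) (hc₂' : c₂ ≤ 1)
    (L₁ L₂ : C(S, ℝ) →L[ℝ] C(S, ℝ))
    (hL₁ : ∀ N : ℝ, ∃ Q : Set C(S, ℝ), IsCompact Q ∧ ∀ g, ‖g‖ ≤ N → L₁ g ∈ Q)
    (hL₂ : ∀ N : ℝ, ∃ Q : Set C(S, ℝ), IsCompact Q ∧ ∀ g, ‖g‖ ≤ N → L₂ g ∈ Q)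
    (hK₁ : ∀ g : C(S, ℝ), (∀ s, 0 ≤ g s) → ∀ t ∈ J₁, c₁ * ‖L₁ g‖ ≤ L₁ g t)
    (hK₂ : ∀ g : C(S, ℝ), (∀ s, 0 ≤ g s) → ∀ t ∈ J₂, c₂ * ‖L₂ g‖ ≤ L₂ g t)
    (F₁ F₂ : C(S, ℝ) × C(S, ℝ) → C(S, ℝ)) (hF₁c : Continuous F₁) (hF₂c : Continuous F₂)
    (hF₁n : ∀ x s, 0 ≤ F₁ x s) (hF₂n : ∀ x s, 0 ≤ F₂ x s)
    (hF₁b : ∀ R : ℝ, ∃ N, ∀ x, ‖x‖ ≤ R → ‖F₁ x‖ ≤ N)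
    (hF₂b : ∀ R : ℝ, ∃ N, ∀ x, ‖x‖ ≤ R → ‖F₂ x‖ ≤ N)
    (ρ₁ ρ₂ r₁ r₂ : ℝ) (hρ₁ : 0 < ρ₁) (hρ₂ : 0 < ρ₂) (hr₁ : ρ₁ < r₁) (hr₂ : ρ₂ < r₂)
    (h1 : ∀ u v, ‖u‖ ≤ ρ₁ → ‖v‖ ≤ ρ₂ → ‖L₁ (F₁ (u, v))‖ ≤ ρ₁ ∧ ‖L₂ (F₂ (u, v))‖ ≤ ρ₂)
    (h01 : ∀ u v : C(S, ℝ), (∀ t ∈ J₁, r₁ ≤ u t) → ‖u‖ ≤ r₁ / c₁ → ‖v‖ ≤ r₂ / c₂ →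
      ∀ t ∈ J₁, r₁ < L₁ (F₁ (u, v)) t)
    (h02 : ∀ u v : C(S, ℝ), (∀ t ∈ J₂, r₂ ≤ v t) → ‖u‖ ≤ r₁ / c₁ → ‖v‖ ≤ r₂ / c₂ →
      ∀ t ∈ J₂, r₂ < L₂ (F₂ (u, v)) t) :
    ∃ u v : C(S, ℝ), (∀ t ∈ J₁, c₁ * ‖u‖ ≤ u t) ∧ (∀ t ∈ J₂, c₂ * ‖v‖ ≤ v t) ∧
      L₁ (F₁ (u, v)) = u ∧ L₂ (F₂ (u, v)) = v ∧ (u ≠ 0 ∨ v ≠ 0) := by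
  have hr₁p : 0 < r₁ := hρ₁.trans hr₁
  have hr₂p : 0 < r₂ := hρ₂.trans hr₂
  -- the minimum functionals
  have hmu : ∀ J : Set S, IsCompact J → J.Nonempty → ∃ μ : C(S, ℝ) → ℝ, Continuous μ ∧
      ∀ u, (∀ t ∈ J, μ u ≤ u t) ∧ ∃ t ∈ J, u t = μ u := by
    intro J hJ hJn
    refine ⟨fun u => sInf ((fun t => u t) '' J), ?_, fun u => ?_⟩
    · exact hJ.continuous_sInf (f := fun (u : C(S, ℝ)) t => u t) (by fun_prop)
    · obtain ⟨t, ht, hmin, hle⟩ := hJ.exists_sInf_image_eq_and_le hJn u.continuous.continuousOn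
      refine ⟨fun s hs => ?_, t, ht, hmin.symm⟩
      exact hmin.le.trans (hle s hs)
  obtain ⟨μ₁, hμ₁c, hμ₁⟩ := hmu J₁ hJ₁ hJ₁n
  obtain ⟨μ₂, hμ₂c, hμ₂⟩ := hmu J₂ hJ₂ hJ₂n
  set p : C(S, ℝ) × C(S, ℝ) → ℝ := fun x => max (‖x.1‖ / ρ₁) (‖x.2‖ / ρ₂) with hp
  have hpc : Continuous p := by simp only [hp]; fun_prop
  have hp0 : ∀ x, 0 ≤ p x := fun x => le_max_of_le_left (by positivity)
  have hpz : p 0 = 0 := by simp [hp]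
  have hppos : ∀ x, x ≠ 0 → 0 < p x := by
    intro x hx
    by_contra h
    have h1 : ‖x.1‖ / ρ₁ ≤ 0 := (le_max_left _ _).trans (not_lt.1 h)
    have h2 : ‖x.2‖ / ρ₂ ≤ 0 := (le_max_right _ _).trans (not_lt.1 h)
    rw [div_le_iff₀ hρ₁, zero_mul, norm_le_zero_iff] at h1
    rw [div_le_iff₀ hρ₂, zero_mul, norm_le_zero_iff] at h2
    exact hx (Prod.ext h1 h2)
  have hp1 : ∀ x, ‖x.1‖ ≤ p x * ρ₁ := fun x => (div_le_iff₀ hρ₁).1 (le_max_left _ _)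
  have hp2 : ∀ x, ‖x.2‖ ≤ p x * ρ₂ := fun x => (div_le_iff₀ hρ₂).1 (le_max_right _ _)
  have hple : ∀ x b, ‖x.1‖ ≤ b * ρ₁ → ‖x.2‖ ≤ b * ρ₂ → p x ≤ b := fun x b h1 h2 =>
    max_le ((div_le_iff₀ hρ₁).2 h1) ((div_le_iff₀ hρ₂).2 h2)
  have hpsmul : ∀ (a : ℝ) x, 0 ≤ a → p (a • x) = a * p x := by
    intro a x ha
    simp only [hp, Prod.smul_fst, Prod.smul_snd, norm_smul, Real.norm_eq_abs, abs_of_nonneg ha]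
    rw [mul_max_of_nonneg _ _ ha, mul_div_assoc, mul_div_assoc]
  set A₁ : C(S, ℝ) × C(S, ℝ) → ℝ := fun x => max (p x ^ 2) (μ₁ x.1 / r₁) with hA₁
  set A₂ : C(S, ℝ) × C(S, ℝ) → ℝ := fun x => max (p x ^ 2) (μ₂ x.2 / r₂) with hA₂
  have hA₁c : Continuous A₁ := by simp only [hA₁]; fun_prop
  have hA₂c : Continuous A₂ := by simp only [hA₂]; fun_prop
  have hA₁p : ∀ x, p x ^ 2 ≤ A₁ x := fun x => le_max_left _ _
  have hA₂p : ∀ x, p x ^ 2 ≤ A₂ x := fun x => le_max_left _ _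
  have hA₁0 : ∀ x, 0 ≤ A₁ x := fun x => (sq_nonneg _).trans (hA₁p x)
  have hA₂0 : ∀ x, 0 ≤ A₂ x := fun x => (sq_nonneg _).trans (hA₂p x)
  have hμ₁n : ∀ u, μ₁ u ≤ ‖u‖ := fun u => by
    obtain ⟨t, ht, h⟩ := (hμ₁ u).2
    rw [← h]; exact (le_abs_self _).trans (u.norm_coe_le_norm t)
  have hμ₂n : ∀ u, μ₂ u ≤ ‖u‖ := fun u => by
    obtain ⟨t, ht, h⟩ := (hμ₂ u).2
    rw [← h]; exact (le_abs_self _).trans (u.norm_coe_le_norm t)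
  have hμ₁z : μ₁ 0 = 0 := by
    obtain ⟨t, ht, h⟩ := (hμ₁ 0).2
    rw [← h]; rfl
  have hμ₂z : μ₂ 0 = 0 := by
    obtain ⟨t, ht, h⟩ := (hμ₂ 0).2
    rw [← h]; rfl
  have hA₁z : A₁ 0 = 0 := by simp [hA₁, hpz, hμ₁z]
  have hA₂z : A₂ 0 = 0 := by simp [hA₂, hpz, hμ₂z]
  set C : Set (C(S, ℝ) × C(S, ℝ)) := {x | (∀ t ∈ J₁, c₁ * ‖x.1‖ ≤ x.1 t) ∧
    (∀ t ∈ J₂, c₂ * ‖x.2‖ ≤ x.2 t) ∧ ‖x.1‖ ≤ ρ₁ ∧ ‖x.2‖ ≤ ρ₂} with hCdef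
  -- scaled point
  set Ψ : C(S, ℝ) × C(S, ℝ) → C(S, ℝ) × C(S, ℝ) := fun x => ((A₁ x)⁻¹ • x.1, (A₂ x)⁻¹ • x.2) with hΨ
  have hscale : ∀ (a c r m n : ℝ), 0 ≤ a → 0 < c → 0 < r → 0 ≤ n → c * n ≤ m → m / r ≤ a →
      a⁻¹ * n ≤ r / c := by
    intro a c r m n ha hc hr hn hm hma
    rcases ha.eq_or_lt with h | h
    · rw [← h]; simp; positivity
    · rw [inv_mul_le_iff₀ h, ← mul_div_assoc, le_div_iff₀ hc]
      rw [div_le_iff₀ hr] at hma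
      linarith
  have hΨ1 : ∀ x ∈ C, ‖(Ψ x).1‖ ≤ r₁ / c₁ := by
    intro x hx
    simp only [hΨ, norm_smul, norm_inv, Real.norm_eq_abs, abs_of_nonneg (hA₁0 x)]
    obtain ⟨t, ht, h⟩ := (hμ₁ x.1).2
    exact hscale _ _ _ (μ₁ x.1) _ (hA₁0 x) hc₁ hr₁p (norm_nonneg _) (h ▸ hx.1 t ht)
      (le_max_right _ _)
  have hΨ2 : ∀ x ∈ C, ‖(Ψ x).2‖ ≤ r₂ / c₂ := by
    intro x hx
    simp only [hΨ, norm_smul, norm_inv, Real.norm_eq_abs, abs_of_nonneg (hA₂0 x)]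
    obtain ⟨t, ht, h⟩ := (hμ₂ x.2).2
    exact hscale _ _ _ (μ₂ x.2) _ (hA₂0 x) hc₂ hr₂p (norm_nonneg _) (h ▸ hx.2.1 t ht)
      (le_max_right _ _)
  have hΨn : ∀ x ∈ C, ‖Ψ x‖ ≤ max (r₁ / c₁) (r₂ / c₂) := fun x hx => by
    rw [Prod.norm_def]; exact max_le_max (hΨ1 x hx) (hΨ2 x hx)
  have hA₁le : ∀ x ∈ C, A₁ x ≤ 1 := by
    intro x hx
    have h := hple x 1 (by simpa using hx.2.2.1) (by simpa using hx.2.2.2)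
    refine max_le (by nlinarith [hp0 x]) ((div_le_one hr₁p).2 ?_)
    linarith [hμ₁n x.1, hx.2.2.1]
  have hA₂le : ∀ x ∈ C, A₂ x ≤ 1 := by
    intro x hx
    have h := hple x 1 (by simpa using hx.2.2.1) (by simpa using hx.2.2.2)
    refine max_le (by nlinarith [hp0 x]) ((div_le_one hr₂p).2 ?_)
    linarith [hμ₂n x.2, hx.2.2.2]
  -- continuity of the nonlinear part
  have hΓ : ∀ (A : C(S, ℝ) × C(S, ℝ) → ℝ) (F : C(S, ℝ) × C(S, ℝ) → C(S, ℝ)), Continuous A →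
      A 0 = 0 → (∀ x, 0 ≤ A x) → (∀ x ∈ C, A x ≤ 1) → Continuous F →
      (∀ R : ℝ, ∃ N, ∀ x, ‖x‖ ≤ R → ‖F x‖ ≤ N) →
      ContinuousOn (fun x => A x • F (Ψ x)) C ∧ ∃ N, ∀ x ∈ C, ‖A x • F (Ψ x)‖ ≤ N := by
    intro A F hAc hAz hA0 hA1 hFc hFb
    obtain ⟨N, hN⟩ := hFb (max (r₁ / c₁) (r₂ / c₂))
    have hb : ∀ x ∈ C, ‖A x • F (Ψ x)‖ ≤ A x * N := fun x hx => by
      rw [norm_smul, Real.norm_eq_abs, abs_of_nonneg (hA0 x)]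
      exact mul_le_mul_of_nonneg_left (hN _ (hΨn x hx)) (hA0 x)
    refine ⟨fun x hx => ?_, |N|, fun x hx => (hb x hx).trans ?_⟩
    · by_cases h0 : x = 0
      · subst h0
        have : Filter.Tendsto (fun x => A x * N) (nhdsWithin 0 C) (nhds 0) := by
          have h := (hAc.mul_const N).tendsto 0
          rw [hAz, zero_mul] at h
          exact h.mono_left nhdsWithin_le_nhds
        rw [ContinuousWithinAt]
        simp only [hAz, zero_smul]
        refine squeeze_zero_norm' ?_ this
        filter_upwards [self_mem_nhdsWithin] with y hy using hb y hy
      · apply ContinuousAt.continuousWithinAt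
        have h := hppos x h0
        have hx1 : A₁ x ≠ 0 := ((pow_pos h 2).trans_le (hA₁p x)).ne'
        have hx2 : A₂ x ≠ 0 := ((pow_pos h 2).trans_le (hA₂p x)).ne'
        have hΨc : ContinuousAt Ψ x :=
          ((hA₁c.continuousAt.inv₀ hx1).smul continuousAt_fst).prodMk
            ((hA₂c.continuousAt.inv₀ hx2).smul continuousAt_snd)
        exact hAc.continuousAt.smul (hFc.continuousAt.comp hΨc)
    · have := hA1 x hx
      nlinarith [hA0 x, le_abs_self N, abs_nonneg N]
  obtain ⟨hΓ₁c, N₁, hN₁⟩ := hΓ A₁ F₁ hA₁c hA₁z hA₁0 hA₁le hF₁c hF₁b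
  obtain ⟨hΓ₂c, N₂, hN₂⟩ := hΓ A₂ F₂ hA₂c hA₂z hA₂0 hA₂le hF₂c hF₂b
  obtain ⟨Q₁, hQ₁, hQ₁m⟩ := hL₁ N₁
  obtain ⟨Q₂, hQ₂, hQ₂m⟩ := hL₂ N₂
  set R : ℝ := max (r₁ / c₁ / ρ₁) (r₂ / c₂ / ρ₂) with hR
  have hR1 : 1 ≤ R := by
    refine le_max_of_le_left ?_
    rw [le_div_iff₀ hρ₁, one_mul, le_div_iff₀ hc₁]
    nlinarith
  set l : C(S, ℝ) × C(S, ℝ) → ℝ := fun x => max (1 / R - p x) 0 with hl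
  have hlc : Continuous l := by simp only [hl]; fun_prop
  have hl0 : ∀ x, 0 ≤ l x := fun x => le_max_right _ _
  have hR' : 0 < 1 / R := by positivity
  have hl1 : ∀ x, l x ≤ 1 / R := fun x => max_le (by linarith [hp0 x]) hR'.le
  set e : C(S, ℝ) := ContinuousMap.const S 1 with he
  have hen : ‖e‖ ≤ 1 := (ContinuousMap.norm_le _ zero_le_one).2 (fun t => by simp [he])
  set G : C(S, ℝ) × C(S, ℝ) → C(S, ℝ) × C(S, ℝ) := fun x =>
    (L₁ (A₁ x • F₁ (Ψ x)) + l x • e, L₂ (A₂ x • F₂ (Ψ x)) + l x • e) with hG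
  have hGc : ContinuousOn G C :=
    ((L₁.continuous.comp_continuousOn hΓ₁c).add (hlc.smul continuous_const).continuousOn).prodMk
    ((L₂.continuous.comp_continuousOn hΓ₂c).add (hlc.smul continuous_const).continuousOn)
  set H : C(S, ℝ) × C(S, ℝ) → C(S, ℝ) × C(S, ℝ) := fun x => (max 1 (p (G x)))⁻¹ • G x with hH
  have hmaxpos : ∀ y : C(S, ℝ) × C(S, ℝ), 0 < max 1 (p y) := fun y => lt_max_of_lt_left one_pos
  have hHc : ContinuousOn H C := by
    refine ContinuousOn.smul (ContinuousOn.inv₀ ?_ fun x _ => (hmaxpos _).ne') hGc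
    exact continuousOn_const.sup (hpc.comp_continuousOn hGc)
  -- cone conditions
  have hcone : ∀ (J : Set S) (c : ℝ) (w : C(S, ℝ)) (b : ℝ), 0 < c → c ≤ 1 → 0 ≤ b →
      (∀ t ∈ J, c * ‖w‖ ≤ w t) → ∀ t ∈ J, c * ‖w + b • e‖ ≤ (w + b • e) t := by
    intro J c w b hc hc' hb hw t ht
    have h2 : ‖w + b • e‖ ≤ ‖w‖ + b := by
      refine (norm_add_le _ _).trans ?_
      rw [norm_smul, Real.norm_eq_abs, abs_of_nonneg hb]
      nlinarith
    have h3 : (w + b • e) t = w t + b := by simp [he]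
    rw [h3]
    nlinarith [hw t ht]
  have hG1 : ∀ x, ∀ t ∈ J₁, c₁ * ‖(G x).1‖ ≤ (G x).1 t := fun x =>
    hcone J₁ c₁ _ _ hc₁ hc₁' (hl0 x) (hK₁ _ fun s => mul_nonneg (hA₁0 x) (hF₁n _ s))
  have hG2 : ∀ x, ∀ t ∈ J₂, c₂ * ‖(G x).2‖ ≤ (G x).2 t := fun x =>
    hcone J₂ c₂ _ _ hc₂ hc₂' (hl0 x) (hK₂ _ fun s => mul_nonneg (hA₂0 x) (hF₂n _ s))
  have hsm : ∀ (J : Set S) (c a : ℝ) (w : C(S, ℝ)), 0 ≤ a → (∀ t ∈ J, c * ‖w‖ ≤ w t) →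
      ∀ t ∈ J, c * ‖a • w‖ ≤ (a • w) t := by
    intro J c a w ha hw t ht
    rw [norm_smul, Real.norm_eq_abs, abs_of_nonneg ha]
    have : (a • w) t = a * w t := rfl
    rw [this]
    nlinarith [mul_le_mul_of_nonneg_left (hw t ht) ha]
  have hHm : MapsTo H C C := by
    intro x _
    have hi : 0 ≤ (max 1 (p (G x)))⁻¹ := (inv_pos.2 (hmaxpos _)).le
    have hpH : p (H x) ≤ 1 := by
      simp only [hH]
      rw [hpsmul _ _ hi, inv_mul_le_iff₀ (hmaxpos _), mul_one]
      exact le_max_right _ _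
    refine ⟨hsm J₁ c₁ _ _ hi (hG1 x), hsm J₂ c₂ _ _ hi (hG2 x), ?_, ?_⟩
    · exact (hp1 _).trans (by nlinarith)
    · exact (hp2 _).trans (by nlinarith)
  have hCcl : IsClosed C := by
    simp only [hCdef]
    simp only [ofPred_and, ofPred_forall]
    refine IsClosed.inter ?_ (IsClosed.inter ?_ (IsClosed.inter ?_ ?_))
    · exact isClosed_iInter fun t => isClosed_iInter fun _ =>
        isClosed_le (by fun_prop) ((continuous_eval_const t).comp continuous_fst)
    · exact isClosed_iInter fun t => isClosed_iInter fun _ =>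
        isClosed_le (by fun_prop) ((continuous_eval_const t).comp continuous_snd)
    · exact isClosed_le (by fun_prop) (by fun_prop)
    · exact isClosed_le (by fun_prop) (by fun_prop)
  have hCcv : Convex ℝ C := by
    intro x hx y hy a b ha hb hab
    have key : ∀ (J : Set S) (c ρ : ℝ) (w z : C(S, ℝ)), 0 < c → (∀ t ∈ J, c * ‖w‖ ≤ w t) →
        (∀ t ∈ J, c * ‖z‖ ≤ z t) → ‖w‖ ≤ ρ → ‖z‖ ≤ ρ →
        (∀ t ∈ J, c * ‖a • w + b • z‖ ≤ (a • w + b • z) t) ∧ ‖a • w + b • z‖ ≤ ρ := by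
      intro J c ρ w z hc hw hz hwρ hzρ
      have hn : ‖a • w + b • z‖ ≤ a * ‖w‖ + b * ‖z‖ := by
        refine (norm_add_le _ _).trans (le_of_eq ?_)
        rw [norm_smul, norm_smul, Real.norm_eq_abs, Real.norm_eq_abs, abs_of_nonneg ha,
          abs_of_nonneg hb]
      refine ⟨fun t ht => ?_, hn.trans ?_⟩
      · have : (a • w + b • z) t = a * w t + b * z t := rfl
        rw [this]
        have := mul_le_mul_of_nonneg_left (hw t ht) ha
        have := mul_le_mul_of_nonneg_left (hz t ht) hb
        have := mul_le_mul_of_nonneg_left hn hc.le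
        linarith
      · have : ρ = a * ρ + b * ρ := by rw [← add_mul, hab, one_mul]
        nlinarith
    have k1 := key J₁ c₁ ρ₁ x.1 y.1 hc₁ hx.1 hy.1 hx.2.2.1 hy.2.2.1
    have k2 := key J₂ c₂ ρ₂ x.2 y.2 hc₂ hx.2.1 hy.2.1 hx.2.2.2 hy.2.2.2
    exact ⟨k1.1, k2.1, k1.2, k2.2⟩
  have hCne : C.Nonempty := ⟨0, by simp [hCdef, hρ₁.le, hρ₂.le]⟩
  -- compactness
  set Q : Set (C(S, ℝ) × C(S, ℝ)) := (fun q : ℝ × ℝ × C(S, ℝ) × C(S, ℝ) =>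
    q.1 • (q.2.2.1 + q.2.1 • e, q.2.2.2 + q.2.1 • e)) ''
      (Icc 0 1 ×ˢ Icc 0 (1 / R) ×ˢ Q₁ ×ˢ Q₂) with hQ
  have hQc : IsCompact Q := by
    refine (isCompact_Icc.prod (isCompact_Icc.prod (hQ₁.prod hQ₂))).image ?_
    fun_prop
  have hHQ : MapsTo H C Q := by
    intro x hx
    refine ⟨((max 1 (p (G x)))⁻¹, l x, L₁ (A₁ x • F₁ (Ψ x)), L₂ (A₂ x • F₂ (Ψ x))),
      ⟨⟨(inv_pos.2 (hmaxpos _)).le, inv_le_one_of_one_le₀ (le_max_left _ _)⟩,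
        ⟨hl0 x, hl1 x⟩, hQ₁m _ (hN₁ x hx), hQ₂m _ (hN₂ x hx)⟩, rfl⟩
  obtain ⟨x, hxC, hx⟩ := schauder hCcv hCcl hCne H hHc hHm hQc hHQ
  -- the normalization is inactive
  have hpG : p (G x) ≤ 1 := by
    by_contra hgt
    push Not at hgt
    have hmax : max 1 (p (G x)) = p (G x) := max_eq_right hgt.le
    have hpx : p x = 1 := by
      rw [← hx]
      simp only [hH]
      rw [hpsmul _ _ (inv_pos.2 (hmaxpos _)).le, hmax, inv_mul_cancel₀ (by linarith)]
    have ha1 : A₁ x = 1 := le_antisymm (hA₁le x hxC) (by simpa [hpx] using hA₁p x)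
    have ha2 : A₂ x = 1 := le_antisymm (hA₂le x hxC) (by simpa [hpx] using hA₂p x)
    have hlx : l x = 0 := by
      simp only [hl, hpx]
      refine max_eq_right ?_
      rw [sub_nonpos, div_le_one (by linarith)]
      exact hR1
    have hΨx : Ψ x = (x.1, x.2) := by simp [hΨ, ha1, ha2]
    have hh := h1 x.1 x.2 hxC.2.2.1 hxC.2.2.2
    have : p (G x) ≤ 1 := by
      refine hple _ _ ?_ ?_
      · simp only [hG, ha1, hlx, hΨx, one_smul, zero_smul, add_zero, one_mul]; exact hh.1
      · simp only [hG, ha2, hlx, hΨx, one_smul, zero_smul, add_zero, one_mul]; exact hh.2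
    linarith
  have hGx : G x = x := by
    have : H x = G x := by simp only [hH, max_eq_left hpG, inv_one, one_smul]
    rw [← this, hx]
  have hx0 : x ≠ 0 := by
    intro h0
    rw [h0] at hGx
    have h := congrArg Prod.fst hGx
    simp only [hG, hA₁z, zero_smul, map_zero, zero_add, hl, hpz, sub_zero, max_eq_left hR'.le] at h
    obtain ⟨s⟩ := ‹Nonempty S›
    have h' := congrArg (fun w : C(S, ℝ) => w s) h
    simp [he] at h'
    linarith
  have hpx := hppos x hx0
  have hα : 0 < p x ^ 2 := by positivity
  have hA1pos : 0 < A₁ x := hα.trans_le (hA₁p x)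
  have hA2pos : 0 < A₂ x := hα.trans_le (hA₂p x)
  have hx1 : x.1 = A₁ x • L₁ (F₁ (Ψ x)) + l x • e := by
    conv_lhs => rw [← hGx]
    simp only [hG, map_smul]
  have hx2 : x.2 = A₂ x • L₂ (F₂ (Ψ x)) + l x • e := by
    conv_lhs => rw [← hGx]
    simp only [hG, map_smul]
  have hΨeval1 : ∀ t, (Ψ x).1 t = (A₁ x)⁻¹ * x.1 t := fun t => rfl
  have hΨeval2 : ∀ t, (Ψ x).2 t = (A₂ x)⁻¹ * x.2 t := fun t => rfl
  have hbig1 : μ₁ x.1 / r₁ ≤ p x ^ 2 := by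
    by_contra hgt
    push Not at hgt
    have hA : A₁ x = μ₁ x.1 / r₁ := max_eq_right hgt.le
    have hm : μ₁ x.1 = r₁ * A₁ x := by rw [hA]; field_simp
    obtain ⟨t, ht, hmt⟩ := (hμ₁ x.1).2
    have h := h01 (Ψ x).1 (Ψ x).2 (fun s hs => by
      rw [hΨeval1, le_inv_mul_iff₀ hA1pos, mul_comm, ← hm]
      exact (hμ₁ x.1).1 s hs) (hΨ1 x hxC) (hΨ2 x hxC) t ht
    have h' : x.1 t = A₁ x * L₁ (F₁ (Ψ x)) t + l x := by
      conv_lhs => rw [hx1]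
      simp [he]
    rw [hmt, hm] at h'
    have h5 : A₁ x * r₁ < A₁ x * L₁ (F₁ (Ψ x)) t := mul_lt_mul_of_pos_left h hA1pos
    have h6 := hl0 x
    linarith
  have hbig2 : μ₂ x.2 / r₂ ≤ p x ^ 2 := by
    by_contra hgt
    push Not at hgt
    have hA : A₂ x = μ₂ x.2 / r₂ := max_eq_right hgt.le
    have hm : μ₂ x.2 = r₂ * A₂ x := by rw [hA]; field_simp
    obtain ⟨t, ht, hmt⟩ := (hμ₂ x.2).2
    have h := h02 (Ψ x).1 (Ψ x).2 (fun s hs => by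
      rw [hΨeval2, le_inv_mul_iff₀ hA2pos, mul_comm, ← hm]
      exact (hμ₂ x.2).1 s hs) (hΨ1 x hxC) (hΨ2 x hxC) t ht
    have h' : x.2 t = A₂ x * L₂ (F₂ (Ψ x)) t + l x := by
      conv_lhs => rw [hx2]
      simp [he]
    rw [hmt, hm] at h'
    have h5 : A₂ x * r₂ < A₂ x * L₂ (F₂ (Ψ x)) t := mul_lt_mul_of_pos_left h hA2pos
    have h6 := hl0 x
    linarith
  have hA1 : A₁ x = p x ^ 2 := max_eq_left hbig1
  have hA2 : A₂ x = p x ^ 2 := max_eq_left hbig2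
  have hΨx : Ψ x = (p x ^ 2)⁻¹ • x := by
    simp only [hΨ, hA1, hA2]; rfl
  have hlx : l x = 0 := by
    refine max_eq_right ?_
    have h3 : p (Ψ x) ≤ R := max_le_max
      (div_le_div_of_nonneg_right (hΨ1 x hxC) hρ₁.le) (div_le_div_of_nonneg_right (hΨ2 x hxC) hρ₂.le)
    rw [hΨx, hpsmul _ _ (by positivity)] at h3
    have h4 : (p x ^ 2)⁻¹ * p x = 1 / p x := by field_simp
    rw [h4] at h3
    rw [sub_nonpos]
    exact (one_div_le (by linarith) hpx).2 h3
  refine ⟨(Ψ x).1, (Ψ x).2, hsm J₁ c₁ _ _ (inv_pos.2 hA1pos).le hxC.1,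
    hsm J₂ c₂ _ _ (inv_pos.2 hA2pos).le hxC.2.1, ?_, ?_, ?_⟩
  · change _ = (A₁ x)⁻¹ • x.1
    conv_rhs => rw [hx1, hlx, zero_smul, add_zero, smul_smul, inv_mul_cancel₀ hA1pos.ne', one_smul]
  · change _ = (A₂ x)⁻¹ • x.2
    conv_rhs => rw [hx2, hlx, zero_smul, add_zero, smul_smul, inv_mul_cancel₀ hA2pos.ne', one_smul]
  · by_contra hcon
    push Not at hcon
    have : Ψ x = 0 := Prod.ext hcon.1 hcon.2
    rw [hΨx, smul_eq_zero] at this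
    rcases this with h | h
    · exact (inv_pos.2 hα).ne' h
    · exact hx0 h


lemma kernel_op (κ : ℝ → ℝ → ℝ) (hκ : Continuous (fun p : ℝ × ℝ => κ p.1 p.2)) :
    ∃ L : C(Set.Icc (0:ℝ) 1, ℝ) →L[ℝ] C(Set.Icc (0:ℝ) 1, ℝ),
      (∀ g t, L g t = ∫ s in (0:ℝ)..1, κ t s * Set.IccExtend zero_le_one g s) ∧
      ∀ N : ℝ, ∃ Q : Set C(Set.Icc (0:ℝ) 1, ℝ), IsCompact Q ∧ ∀ g, ‖g‖ ≤ N → L g ∈ Q := by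
  have hsq : IsCompact (Set.Icc (0:ℝ) 1 ×ˢ Set.Icc (0:ℝ) 1) := isCompact_Icc.prod isCompact_Icc
  obtain ⟨B, hB⟩ := hsq.exists_bound_of_continuousOn hκ.continuousOn
  have hB0 : 0 ≤ B := (norm_nonneg _).trans
    (hB (0, 0) ⟨⟨le_rfl, zero_le_one⟩, ⟨le_rfl, zero_le_one⟩⟩)
  have hgc : ∀ g : C(Set.Icc (0:ℝ) 1, ℝ), Continuous (Set.IccExtend zero_le_one g) :=
    fun g => g.continuous.Icc_extend'
  have hgb : ∀ (g : C(Set.Icc (0:ℝ) 1, ℝ)) s, ‖Set.IccExtend zero_le_one g s‖ ≤ ‖g‖ :=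
    fun g s => g.norm_coe_le_norm _
  have hintg : ∀ (g : C(Set.Icc (0:ℝ) 1, ℝ)) (t : ℝ), Continuous
      (fun s => κ t s * Set.IccExtend zero_le_one g s) := by
    intro g t
    have h1 : Continuous (fun s => κ t s) := hκ.comp (by fun_prop : Continuous fun s : ℝ => (t, s))
    exact h1.mul (hgc g)
  have hcont : ∀ g : C(Set.Icc (0:ℝ) 1, ℝ), Continuous (fun t : Set.Icc (0:ℝ) 1 =>
      ∫ s in (0:ℝ)..1, κ t s * Set.IccExtend zero_le_one g s) := by
    intro g
    refine intervalIntegral.continuous_parametric_intervalIntegral_of_continuous' ?_ _ _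
    have h1 : Continuous (fun p : Set.Icc (0:ℝ) 1 × ℝ => κ p.1 p.2) :=
      hκ.comp (by fun_prop : Continuous fun p : Set.Icc (0:ℝ) 1 × ℝ => ((p.1 : ℝ), p.2))
    exact h1.mul ((hgc g).comp continuous_snd)
  let L0 : C(Set.Icc (0:ℝ) 1, ℝ) →ₗ[ℝ] C(Set.Icc (0:ℝ) 1, ℝ) :=
    { toFun := fun g => ⟨fun t => ∫ s in (0:ℝ)..1, κ t s * Set.IccExtend zero_le_one g s, hcont g⟩
      map_add' := by
        intro g h
        ext t
        change (∫ s in (0:ℝ)..1, κ t s * Set.IccExtend zero_le_one (g + h) s) =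
          (∫ s in (0:ℝ)..1, κ t s * Set.IccExtend zero_le_one g s) +
          ∫ s in (0:ℝ)..1, κ t s * Set.IccExtend zero_le_one h s
        rw [← intervalIntegral.integral_add ((hintg g t).intervalIntegrable _ _)
          ((hintg h t).intervalIntegrable _ _)]
        congr 1
        ext s
        simp [Set.IccExtend, mul_add]
      map_smul' := by
        intro c g
        ext t
        change (∫ s in (0:ℝ)..1, κ t s * Set.IccExtend zero_le_one (c • g) s) =
          c * (∫ s in (0:ℝ)..1, κ t s * Set.IccExtend zero_le_one g s)
        rw [← intervalIntegral.integral_const_mul]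
        congr 1
        ext s
        simp [Set.IccExtend]
        ring }
  have hL0 : ∀ g t, L0 g t = ∫ s in (0:ℝ)..1, κ t s * Set.IccExtend zero_le_one g s :=
    fun g t => rfl
  have hbound : ∀ g, ‖L0 g‖ ≤ B * ‖g‖ := by
    intro g
    rw [ContinuousMap.norm_le _ (by positivity)]
    intro t
    rw [hL0]
    refine (intervalIntegral.norm_integral_le_of_norm_le_const (C := B * ‖g‖) ?_).trans (by simp)
    intro s hs
    rw [Set.uIoc_of_le zero_le_one] at hs
    rw [norm_mul]
    exact mul_le_mul (hB (t, s) ⟨t.2, hs.1.le, hs.2⟩) (hgb g s) (norm_nonneg _) hB0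
  refine ⟨L0.mkContinuous B hbound, fun g t => rfl, fun N => ?_⟩
  have huc := hsq.uniformContinuousOn_of_continuous hκ.continuousOn
  rw [Metric.uniformContinuousOn_iff] at huc
  set A : Set (BoundedContinuousFunction (Set.Icc (0:ℝ) 1) ℝ) :=
    (ContinuousMap.isometryEquivBoundedOfCompact (Set.Icc (0:ℝ) 1) ℝ) '' (L0 '' {g | ‖g‖ ≤ N})
    with hA
  have hAc : IsCompact (closure A) := by
    refine BoundedContinuousFunction.arzela_ascoli (Metric.closedBall 0 (B * N))
      (isCompact_closedBall _ _) A ?_ ?_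
    · rintro f x ⟨_, ⟨g, hg, rfl⟩, rfl⟩
      rw [mem_closedBall_zero_iff]
      exact ((L0 g).norm_coe_le_norm x).trans ((hbound g).trans (mul_le_mul_of_nonneg_left hg hB0))
    · intro t₀
      rw [Metric.equicontinuousAt_iff]
      intro ε hε
      obtain ⟨δ, hδ, h⟩ := huc (ε / (2 * (|N| + 1))) (by positivity)
      refine ⟨δ, hδ, ?_⟩
      rintro t ht ⟨_, _, ⟨g, hg, rfl⟩, rfl⟩
      change dist (L0 g t₀) (L0 g t) < ε
      rw [dist_eq_norm, hL0, hL0, ← intervalIntegral.integral_sub ((hintg g t₀).intervalIntegrable _ _)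
          ((hintg g t).intervalIntegrable _ _)]
      have h2 : ‖g‖ ≤ |N| + 1 := by
        have : ‖g‖ ≤ N := hg
        linarith [le_abs_self N]
      refine (intervalIntegral.norm_integral_le_of_norm_le_const
        (C := ε / (2 * (|N| + 1)) * (|N| + 1)) ?_).trans_lt ?_
      · intro s hs
        rw [Set.uIoc_of_le zero_le_one] at hs
        rw [← sub_mul, norm_mul]
        refine mul_le_mul ?_ ((hgb g s).trans h2) (norm_nonneg _) (by positivity)
        have := h ((t₀ : ℝ), s) ⟨t₀.2, hs.1.le, hs.2⟩ ((t : ℝ), s) ⟨t.2, hs.1.le, hs.2⟩ (by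
          rw [Prod.dist_eq]
          simp only [dist_self]
          refine max_lt ?_ hδ
          rw [dist_comm]
          exact ht)
        rw [dist_eq_norm] at this
        exact this.le
      · have : (|N| + 1) ≠ 0 := by positivity
        rw [sub_zero, abs_one, mul_one]
        rw [show ε / (2 * (|N| + 1)) * (|N| + 1) = ε / 2 by field_simp]
        linarith
  refine ⟨(ContinuousMap.isometryEquivBoundedOfCompact (Set.Icc (0:ℝ) 1) ℝ).symm '' closure A,
    hAc.image (IsometryEquiv.continuous _), fun g hg => ?_⟩
  refine ⟨_, subset_closure ⟨_, ⟨g, hg, rfl⟩, rfl⟩, ?_⟩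
  simp
  rfl

lemma kernel_full (k : ℝ → ℝ → ℝ) (Φ : ℝ → ℝ) (a b c m M : ℝ)
    (hk : ContinuousOn (fun p : ℝ × ℝ => k p.1 p.2) (Set.Icc 0 1 ×ˢ Set.Icc 0 1))
    (ha : 0 ≤ a) (hab : a ≤ b) (hb : b ≤ 1) (hc : c ∈ Set.Ioc (0:ℝ) 1)
    (hΦmeas : Measurable Φ) (hΦnn : ∀ s ∈ Set.Icc (0:ℝ) 1, 0 ≤ Φ s)
    (hΦbdd : ∃ C : ℝ, ∀ᵐ s ∂(volume.restrict (Set.Icc (0:ℝ) 1)), |Φ s| ≤ C)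
    (hub : ∀ t ∈ Set.Icc (0:ℝ) 1, ∀ᵐ s ∂(volume.restrict (Set.Icc (0:ℝ) 1)), |k t s| ≤ Φ s)
    (hlb : ∀ t ∈ Set.Icc a b, ∀ᵐ s ∂(volume.restrict (Set.Icc (0:ℝ) 1)), c * Φ s ≤ k t s)
    (hm : 1 / m = ⨆ t : Set.Icc (0:ℝ) 1, ∫ s in (0:ℝ)..1, |k t.1 s|)
    (hinfpos : 0 < ⨅ t : Set.Icc a b, ∫ s in a..b, k t.1 s)
    (hM : 1 / M = ⨅ t : Set.Icc a b, ∫ s in a..b, k t.1 s) :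
    ∃ L : C(Set.Icc (0:ℝ) 1, ℝ) →L[ℝ] C(Set.Icc (0:ℝ) 1, ℝ),
      (∀ g t, L g t = ∫ s in (0:ℝ)..1, k t s * Set.IccExtend zero_le_one g s) ∧
      (∀ N : ℝ, ∃ Q : Set C(Set.Icc (0:ℝ) 1, ℝ), IsCompact Q ∧ ∀ g, ‖g‖ ≤ N → L g ∈ Q) ∧
      (∀ g, (∀ s, 0 ≤ g s) → ∀ t ∈ {t : Set.Icc (0:ℝ) 1 | a ≤ t.1 ∧ t.1 ≤ b},
        c * ‖L g‖ ≤ L g t) ∧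
      (∀ g B, 0 ≤ B → (∀ s, |g s| ≤ B) → ‖L g‖ ≤ B / m) ∧
      (∀ g B, 0 ≤ B → (∀ s, 0 ≤ g s) →
        (∀ s ∈ {t : Set.Icc (0:ℝ) 1 | a ≤ t.1 ∧ t.1 ≤ b}, B ≤ g s) →
        ∀ t ∈ {t : Set.Icc (0:ℝ) 1 | a ≤ t.1 ∧ t.1 ≤ b}, B / M ≤ L g t) := by
  set κ : ℝ → ℝ → ℝ := fun t s => k (Set.projIcc 0 1 zero_le_one t) (Set.projIcc 0 1 zero_le_one s)
    with hκ
  have hκc : Continuous (fun p : ℝ × ℝ => κ p.1 p.2) := by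
    have h1 : Continuous (fun p : ℝ × ℝ => ((Set.projIcc (0:ℝ) 1 zero_le_one p.1 : ℝ),
        (Set.projIcc (0:ℝ) 1 zero_le_one p.2 : ℝ))) := by
      have := continuous_projIcc (a := (0:ℝ)) (b := 1) (h := zero_le_one)
      fun_prop
    exact hk.comp_continuous h1 (fun p => ⟨Subtype.coe_prop _, Subtype.coe_prop _⟩)
  have hκk : ∀ t ∈ Set.Icc (0:ℝ) 1, ∀ s ∈ Set.Icc (0:ℝ) 1, κ t s = k t s := by
    intro t ht s hs
    simp only [hκ]
    rw [Set.projIcc_of_mem _ ht, Set.projIcc_of_mem _ hs]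
  have hκs : ∀ t, Continuous (κ t) := fun t =>
    hκc.comp (by fun_prop : Continuous fun s : ℝ => (t, s))
  obtain ⟨L, hL, hLQ⟩ := kernel_op κ hκc
  have hgc : ∀ g : C(Set.Icc (0:ℝ) 1, ℝ), Continuous (Set.IccExtend zero_le_one g) :=
    fun g => g.continuous.Icc_extend'
  have hgb : ∀ (g : C(Set.Icc (0:ℝ) 1, ℝ)) s, ‖Set.IccExtend zero_le_one g s‖ ≤ ‖g‖ :=
    fun g s => g.norm_coe_le_norm _
  -- a.e. bounds for the extended kernel
  have hmem : ∀ᵐ s ∂(volume.restrict (Set.Icc (0:ℝ) 1)), s ∈ Set.Icc (0:ℝ) 1 :=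
    ae_restrict_mem measurableSet_Icc
  have hab01 : ∀ t ∈ Set.Icc a b, t ∈ Set.Icc (0:ℝ) 1 := fun t ht =>
    ⟨ha.trans ht.1, ht.2.trans hb⟩
  have hub' : ∀ t ∈ Set.Icc (0:ℝ) 1, ∀ᵐ s ∂(volume.restrict (Set.Icc (0:ℝ) 1)),
      |κ t s| ≤ Φ s := by
    intro t ht
    filter_upwards [hub t ht, hmem] with s h1 h2
    rwa [hκk t ht s h2]
  have hlb' : ∀ t ∈ Set.Icc a b, ∀ᵐ s ∂(volume.restrict (Set.Icc (0:ℝ) 1)),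
      c * Φ s ≤ κ t s := by
    intro t ht
    filter_upwards [hlb t ht, hmem] with s h1 h2
    rwa [hκk t (hab01 t ht) s h2]
  have hI : ∀ F : ℝ → ℝ, ∫ s in (0:ℝ)..1, F s = ∫ s in Set.Icc (0:ℝ) 1, F s := by
    intro F
    rw [intervalIntegral.integral_of_le zero_le_one, integral_Icc_eq_integral_Ioc]
  have hIab : ∀ F : ℝ → ℝ, ∫ s in a..b, F s = ∫ s in Set.Icc a b, F s := by
    intro F
    rw [intervalIntegral.integral_of_le hab, integral_Icc_eq_integral_Ioc]
  have hci : ∀ F : ℝ → ℝ, Continuous F → Integrable F (volume.restrict (Set.Icc (0:ℝ) 1)) :=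
    fun F hF => hF.continuousOn.integrableOn_compact isCompact_Icc
  have hκg : ∀ t (g : C(Set.Icc (0:ℝ) 1, ℝ)), Integrable
      (fun s => κ t s * Set.IccExtend zero_le_one g s) (volume.restrict (Set.Icc (0:ℝ) 1)) :=
    fun t g => hci _ ((hκs t).mul (hgc g))
  have hΦg : ∀ g : C(Set.Icc (0:ℝ) 1, ℝ), Integrable
      (fun s => Φ s * Set.IccExtend zero_le_one g s) (volume.restrict (Set.Icc (0:ℝ) 1)) := by
    intro g
    obtain ⟨C, hC⟩ := hΦbdd
    exact (hci _ (hgc g)).bdd_mul hΦmeas.aestronglyMeasurable hC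
  have hsup : ∀ t : Set.Icc (0:ℝ) 1, ∫ s in Set.Icc (0:ℝ) 1, |κ t s| ≤ 1 / m := by
    intro t
    have hcongr : ∀ t : Set.Icc (0:ℝ) 1, ∫ s in (0:ℝ)..1, |k t.1 s| =
        ∫ s in Set.Icc (0:ℝ) 1, |κ t s| := by
      intro t
      rw [hI]
      refine setIntegral_congr_fun measurableSet_Icc (fun s hs => ?_)
      simp only [hκk t t.2 s hs]
    rw [hm, ← hcongr t]
    refine le_ciSup (f := fun t : Set.Icc (0:ℝ) 1 => ∫ s in (0:ℝ)..1, |k t.1 s|) ?_ t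
    refine ⟨∫ s in Set.Icc (0:ℝ) 1, Φ s, ?_⟩
    rintro _ ⟨t, rfl⟩
    simp only [hcongr]
    refine integral_mono_ae (hci _ (hκs t).abs) ?_ (hub' t t.2)
    obtain ⟨C, hC⟩ := hΦbdd
    exact (Measure.integrableOn_of_bounded (by simp) hΦmeas.aestronglyMeasurable hC)
  refine ⟨L, ?_, hLQ, ?_, ?_, ?_⟩
  · intro g t
    rw [hL]
    refine intervalIntegral.integral_congr (fun s hs => ?_)
    rw [Set.uIcc_of_le zero_le_one] at hs
    simp only [hκk t t.2 s hs]
  · rintro g hg t ⟨hta, htb⟩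
    have h1 : ‖L g‖ ≤ ∫ s in Set.Icc (0:ℝ) 1, Φ s * Set.IccExtend zero_le_one g s := by
      rw [ContinuousMap.norm_le_of_nonempty]
      intro t
      rw [hL, hI]
      refine norm_integral_le_of_norm_le (hΦg g) ?_
      filter_upwards [hub' t t.2] with s h1
      rw [norm_mul]
      refine mul_le_mul h1 (le_of_eq ?_) (norm_nonneg _) ((abs_nonneg _).trans h1)
      exact Real.norm_of_nonneg (hg _)
    refine (mul_le_mul_of_nonneg_left h1 hc.1.le).trans ?_
    rw [hL, hI, ← integral_const_mul]
    refine integral_mono_ae ((hΦg g).const_mul c) (hκg t g) ?_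
    filter_upwards [hlb' t ⟨hta, htb⟩] with s h2
    rw [← mul_assoc]
    exact mul_le_mul_of_nonneg_right h2 (hg _)
  · intro g B hB hgB
    rw [ContinuousMap.norm_le_of_nonempty]
    intro t
    rw [hL, hI]
    refine (norm_integral_le_of_norm_le (g := fun s => B * |κ t s|)
      ((hci _ (hκs t).abs).const_mul B) (Filter.Eventually.of_forall fun s => ?_)).trans ?_
    · rw [norm_mul, mul_comm]
      exact mul_le_mul_of_nonneg_right (hgB _) (norm_nonneg _)
    · rw [integral_const_mul, div_eq_mul_one_div]
      exact mul_le_mul_of_nonneg_left (hsup t) hB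
  · rintro g B hB hg hgB t ⟨hta, htb⟩
    have htab : t.1 ∈ Set.Icc a b := ⟨hta, htb⟩
    have hsub : Set.Icc a b ⊆ Set.Icc (0:ℝ) 1 := hab01
    have hκnn : ∀ᵐ s ∂(volume.restrict (Set.Icc (0:ℝ) 1)), 0 ≤ κ t s := by
      filter_upwards [hlb' t htab, hmem] with s h1 h2
      exact (mul_nonneg hc.1.le (hΦnn s h2)).trans h1
    have hbd : BddBelow (Set.range fun t : Set.Icc a b => ∫ s in a..b, k t.1 s) := by
      by_contra hnb
      rw [iInf, Real.sInf_of_not_bddBelow hnb] at hinfpos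
      exact lt_irrefl _ hinfpos
    have h1 : 1 / M ≤ ∫ s in Set.Icc a b, κ t s := by
      rw [hM]
      refine (ciInf_le hbd ⟨t.1, htab⟩).trans (le_of_eq ?_)
      rw [hIab]
      refine setIntegral_congr_fun measurableSet_Icc (fun s hs => ?_)
      simp only [hκk t t.2 s (hsub hs)]
    rw [hL, hI]
    have h2 : ∫ s in Set.Icc a b, κ t s * Set.IccExtend zero_le_one g s ≤
        ∫ s in Set.Icc (0:ℝ) 1, κ t s * Set.IccExtend zero_le_one g s := by
      refine setIntegral_mono_set (hκg t g) ?_ hsub.eventuallyLE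
      filter_upwards [hκnn] with s h3
      exact mul_nonneg h3 (hg _)
    refine le_trans ?_ h2
    rw [div_eq_mul_one_div]
    refine (mul_le_mul_of_nonneg_left h1 hB).trans ?_
    rw [← integral_const_mul]
    refine integral_mono_ae (((hci _ (hκs t)).mono_measure
      (Measure.restrict_mono hsub le_rfl)).const_mul B)
      ((hκg t g).mono_measure (Measure.restrict_mono hsub le_rfl)) ?_
    filter_upwards [ae_mono (Measure.restrict_mono hsub le_rfl) hκnn,
      ae_restrict_mem measurableSet_Icc] with s h3 h4
    rw [mul_comm]
    refine mul_le_mul_of_nonneg_left ?_ h3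
    rw [Set.IccExtend_of_mem _ _ (hsub h4)]
    exact hgB _ h4

lemma nemytskii (f : ℝ → ℝ → ℝ → ℝ)
    (hf : ContinuousOn (fun p : ℝ × ℝ × ℝ => f p.1 p.2.1 p.2.2)
      (Set.Icc 0 1 ×ˢ (Set.univ : Set (ℝ × ℝ)))) :
    ∃ F : C(Set.Icc (0:ℝ) 1, ℝ) × C(Set.Icc (0:ℝ) 1, ℝ) → C(Set.Icc (0:ℝ) 1, ℝ),
      Continuous F ∧ (∀ x s, F x s = f s (x.1 s) (x.2 s)) ∧
      ∀ R : ℝ, ∃ N : ℝ, ∀ x, ‖x‖ ≤ R → ‖F x‖ ≤ N := by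
  let fc : C(Set.Icc (0:ℝ) 1 × ℝ × ℝ, ℝ) :=
    ⟨fun p => f p.1 p.2.1 p.2.2, hf.comp_continuous
      (f := fun p : Set.Icc (0:ℝ) 1 × ℝ × ℝ => ((p.1 : ℝ), p.2)) (by fun_prop)
      (fun p => ⟨p.1.2, Set.mem_univ _⟩)⟩
  refine ⟨fun x => fc.comp ((ContinuousMap.id _).prodMk (x.1.prodMk x.2)), ?_, fun x s => rfl, ?_⟩
  · refine (ContinuousMap.continuous_postcomp fc).comp ?_
    refine ContinuousMap.continuous_of_continuous_uncurry _ ?_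
    change Continuous fun p : (C(Set.Icc (0:ℝ) 1, ℝ) × C(Set.Icc (0:ℝ) 1, ℝ)) × Set.Icc (0:ℝ) 1 =>
      (p.2, p.1.1 p.2, p.1.2 p.2)
    fun_prop
  · intro R
    obtain ⟨N, hN⟩ := (isCompact_univ.prod ((isCompact_closedBall (0:ℝ) R).prod
      (isCompact_closedBall (0:ℝ) R))).exists_bound_of_continuousOn
      (fc.continuous.continuousOn (s := (Set.univ : Set (Set.Icc (0:ℝ) 1)) ×ˢ
        (Metric.closedBall (0:ℝ) R ×ˢ Metric.closedBall (0:ℝ) R)))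
    refine ⟨N, fun x hx => ?_⟩
    rw [ContinuousMap.norm_le_of_nonempty]
    intro s
    refine hN (s, x.1 s, x.2 s) ⟨Set.mem_univ _, ?_, ?_⟩
    · rw [mem_closedBall_zero_iff]
      exact (x.1.norm_coe_le_norm s).trans ((norm_fst_le x).trans hx)
    · rw [mem_closedBall_zero_iff]
      exact (x.2.norm_coe_le_norm s).trans ((norm_snd_le x).trans hx)

lemma supNorm_extend (u : C(Set.Icc (0:ℝ) 1, ℝ)) :
    supNorm (Set.IccExtend zero_le_one u) = ‖u‖ := by
  rw [ContinuousMap.norm_eq_iSup_norm]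
  unfold supNorm
  congr 1
  ext t
  rw [Set.IccExtend_val]
  rfl

lemma le_infOn_extend (u : C(Set.Icc (0:ℝ) 1, ℝ)) (a b B : ℝ) (ha : 0 ≤ a) (hab : a ≤ b)
    (hb : b ≤ 1) (h : ∀ t ∈ {t : Set.Icc (0:ℝ) 1 | a ≤ t.1 ∧ t.1 ≤ b}, B ≤ u t) :
    B ≤ infOn a b (Set.IccExtend zero_le_one u) := by
  have : Nonempty (Set.Icc a b) := ⟨⟨a, le_rfl, hab⟩⟩
  refine le_ciInf (fun t => ?_)
  have ht : t.1 ∈ Set.Icc (0:ℝ) 1 := ⟨ha.trans t.2.1, t.2.2.trans hb⟩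
  rw [Set.IccExtend_of_mem _ _ ht]
  exact h _ t.2

theorem existence_S2
    (k₁ k₂ : ℝ → ℝ → ℝ) (f₁ f₂ : ℝ → ℝ → ℝ → ℝ) (Φ₁ Φ₂ : ℝ → ℝ)
    (a₁ b₁ c₁ a₂ b₂ c₂ : ℝ)
    (hk₁ : ContinuousOn (fun p : ℝ × ℝ => k₁ p.1 p.2) (Set.Icc 0 1 ×ˢ Set.Icc 0 1))
    (hk₂ : ContinuousOn (fun p : ℝ × ℝ => k₂ p.1 p.2) (Set.Icc 0 1 ×ˢ Set.Icc 0 1))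
    (ha₁ : 0 ≤ a₁) (hab₁ : a₁ ≤ b₁) (hb₁ : b₁ ≤ 1)
    (ha₂ : 0 ≤ a₂) (hab₂ : a₂ ≤ b₂) (hb₂ : b₂ ≤ 1)
    (hc₁ : c₁ ∈ Set.Ioc (0:ℝ) 1) (hc₂ : c₂ ∈ Set.Ioc (0:ℝ) 1)
    (hΦ₁meas : Measurable Φ₁) (hΦ₂meas : Measurable Φ₂)
    (hΦ₁nn : ∀ s ∈ Set.Icc (0:ℝ) 1, 0 ≤ Φ₁ s) (hΦ₂nn : ∀ s ∈ Set.Icc (0:ℝ) 1, 0 ≤ Φ₂ s)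
    (hΦ₁bdd : ∃ C : ℝ, ∀ᵐ s ∂(volume.restrict (Set.Icc (0:ℝ) 1)), |Φ₁ s| ≤ C)
    (hΦ₂bdd : ∃ C : ℝ, ∀ᵐ s ∂(volume.restrict (Set.Icc (0:ℝ) 1)), |Φ₂ s| ≤ C)
    (hΦ₁pos : 0 < ∫ s in a₁..b₁, Φ₁ s) (hΦ₂pos : 0 < ∫ s in a₂..b₂, Φ₂ s)
    (hub₁ : ∀ t ∈ Set.Icc (0:ℝ) 1, ∀ᵐ s ∂(volume.restrict (Set.Icc (0:ℝ) 1)), |k₁ t s| ≤ Φ₁ s)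
    (hub₂ : ∀ t ∈ Set.Icc (0:ℝ) 1, ∀ᵐ s ∂(volume.restrict (Set.Icc (0:ℝ) 1)), |k₂ t s| ≤ Φ₂ s)
    (hlb₁ : ∀ t ∈ Set.Icc a₁ b₁, ∀ᵐ s ∂(volume.restrict (Set.Icc (0:ℝ) 1)), c₁ * Φ₁ s ≤ k₁ t s)
    (hlb₂ : ∀ t ∈ Set.Icc a₂ b₂, ∀ᵐ s ∂(volume.restrict (Set.Icc (0:ℝ) 1)), c₂ * Φ₂ s ≤ k₂ t s)
    (hf₁ : ContinuousOn (fun p : ℝ × ℝ × ℝ => f₁ p.1 p.2.1 p.2.2)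
      (Set.Icc 0 1 ×ˢ (Set.univ : Set (ℝ × ℝ))))
    (hf₂ : ContinuousOn (fun p : ℝ × ℝ × ℝ => f₂ p.1 p.2.1 p.2.2)
      (Set.Icc 0 1 ×ˢ (Set.univ : Set (ℝ × ℝ))))
    (hf₁nn : ∀ t ∈ Set.Icc (0:ℝ) 1, ∀ x y : ℝ, 0 ≤ f₁ t x y)
    (hf₂nn : ∀ t ∈ Set.Icc (0:ℝ) 1, ∀ x y : ℝ, 0 ≤ f₂ t x y)
    (m₁ m₂ M₁ M₂ : ℝ)
    (hm₁pos : 0 < m₁) (hm₂pos : 0 < m₂)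
    (hm₁ : 1 / m₁ = ⨆ t : Set.Icc (0:ℝ) 1, ∫ s in (0:ℝ)..1, |k₁ t.1 s|)
    (hm₂ : 1 / m₂ = ⨆ t : Set.Icc (0:ℝ) 1, ∫ s in (0:ℝ)..1, |k₂ t.1 s|)
    (hM₁pos : 0 < M₁) (hM₂pos : 0 < M₂)
    (hinf₁pos : 0 < ⨅ t : Set.Icc a₁ b₁, ∫ s in a₁..b₁, k₁ t.1 s)
    (hinf₂pos : 0 < ⨅ t : Set.Icc a₂ b₂, ∫ s in a₂..b₂, k₂ t.1 s)
    (hM₁ : 1 / M₁ = ⨅ t : Set.Icc a₁ b₁, ∫ s in a₁..b₁, k₁ t.1 s)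
    (hM₂ : 1 / M₂ = ⨅ t : Set.Icc a₂ b₂, ∫ s in a₂..b₂, k₂ t.1 s)
    (ρ₁ ρ₂ r₁ r₂ : ℝ) (hρ₁ : 0 < ρ₁) (hρ₂ : 0 < ρ₂) (hr₁pos : 0 < r₁) (hr₂pos : 0 < r₂)
    (hr₁ : ρ₁ < r₁) (hr₂ : ρ₂ < r₂)
    (hI1 : condI1 f₁ f₂ m₁ m₂ ρ₁ ρ₂)
    (hI0 : condI0 f₁ f₂ a₁ b₁ c₁ a₂ b₂ c₂ M₁ M₂ r₁ r₂)
    :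
    ∃ u v : ℝ → ℝ, nontrivialSolution k₁ k₂ f₁ f₂ a₁ b₁ c₁ a₂ b₂ c₂ u v := by
  obtain ⟨L₁, hL₁, hQ₁, hK₁, hup₁, hlo₁⟩ := kernel_full k₁ Φ₁ a₁ b₁ c₁ m₁ M₁ hk₁ ha₁ hab₁ hb₁ hc₁
    hΦ₁meas hΦ₁nn hΦ₁bdd hub₁ hlb₁ hm₁ hinf₁pos hM₁
  obtain ⟨L₂, hL₂, hQ₂, hK₂, hup₂, hlo₂⟩ := kernel_full k₂ Φ₂ a₂ b₂ c₂ m₂ M₂ hk₂ ha₂ hab₂ hb₂ hc₂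
    hΦ₂meas hΦ₂nn hΦ₂bdd hub₂ hlb₂ hm₂ hinf₂pos hM₂
  obtain ⟨F₁, hF₁c, hF₁, hF₁b⟩ := nemytskii f₁ hf₁
  obtain ⟨F₂, hF₂c, hF₂, hF₂b⟩ := nemytskii f₂ hf₂
  have hJ : ∀ a b : ℝ, IsCompact {t : Set.Icc (0:ℝ) 1 | a ≤ t.1 ∧ t.1 ≤ b} := by
    intro a b
    refine IsClosed.isCompact ?_
    exact (isClosed_le continuous_const continuous_subtype_val).inter
      (isClosed_le continuous_subtype_val continuous_const)
  have hJn : ∀ a b : ℝ, 0 ≤ a → a ≤ b → b ≤ 1 →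
      {t : Set.Icc (0:ℝ) 1 | a ≤ t.1 ∧ t.1 ≤ b}.Nonempty := fun a b ha hab hb =>
    ⟨⟨a, ha, hab.trans hb⟩, le_rfl, hab⟩
  have hF₁nn : ∀ x s, 0 ≤ F₁ x s := fun x s => by rw [hF₁]; exact hf₁nn s s.2 _ _
  have hF₂nn : ∀ x s, 0 ≤ F₂ x s := fun x s => by rw [hF₂]; exact hf₂nn s s.2 _ _
  have habs : ∀ (u : C(Set.Icc (0:ℝ) 1, ℝ)) R, ‖u‖ ≤ R → ∀ s, u s ∈ Set.Icc (-R) R :=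
    fun u R h s => abs_le.1 ((u.norm_coe_le_norm s).trans h)
  obtain ⟨u, v, hu, hv, hLu, hLv, hne⟩ := abstract_S2
    {t : Set.Icc (0:ℝ) 1 | a₁ ≤ t.1 ∧ t.1 ≤ b₁} {t : Set.Icc (0:ℝ) 1 | a₂ ≤ t.1 ∧ t.1 ≤ b₂}
    (hJ _ _) (hJ _ _) (hJn _ _ ha₁ hab₁ hb₁) (hJn _ _ ha₂ hab₂ hb₂)
    c₁ c₂ hc₁.1 hc₂.1 hc₁.2 hc₂.2 L₁ L₂ hQ₁ hQ₂ hK₁ hK₂ F₁ F₂ hF₁c hF₂c hF₁nn hF₂nn hF₁b hF₂b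
    ρ₁ ρ₂ r₁ r₂ hρ₁ hρ₂ hr₁ hr₂
    (by
      intro u v hu hv
      have h := fun s : Set.Icc (0:ℝ) 1 => hI1 s s.2 (u s) (habs u _ hu s) (v s) (habs v _ hv s)
      constructor
      · refine (hup₁ _ (m₁ * ρ₁) (by positivity) (fun s => ?_)).trans (le_of_eq (by field_simp))
        rw [abs_of_nonneg (hF₁nn _ _), hF₁]
        exact (h s).1.le
      · refine (hup₂ _ (m₂ * ρ₂) (by positivity) (fun s => ?_)).trans (le_of_eq (by field_simp))
        rw [abs_of_nonneg (hF₂nn _ _), hF₂]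
        exact (h s).2.le)
    (by
      intro u v hJu hu hv t ht
      obtain ⟨s, hs, hmin⟩ := (hJ a₁ b₁).exists_isMinOn (hJn _ _ ha₁ hab₁ hb₁)
        (F₁ (u, v)).continuous.continuousOn
      refine lt_of_lt_of_le ?_ (hlo₁ (F₁ (u, v)) (F₁ (u, v) s) (hF₁nn _ _) (hF₁nn _)
        (fun t ht => hmin ht) t ht)
      rw [lt_div_iff₀ hM₁pos, mul_comm, hF₁]
      exact hI0.1 s hs (u s) ⟨hJu s hs, (habs u _ hu s).2⟩ (v s) (habs v _ hv s))
    (by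
      intro u v hJv hu hv t ht
      obtain ⟨s, hs, hmin⟩ := (hJ a₂ b₂).exists_isMinOn (hJn _ _ ha₂ hab₂ hb₂)
        (F₂ (u, v)).continuous.continuousOn
      refine lt_of_lt_of_le ?_ (hlo₂ (F₂ (u, v)) (F₂ (u, v) s) (hF₂nn _ _) (hF₂nn _)
        (fun t ht => hmin ht) t ht)
      rw [lt_div_iff₀ hM₂pos, mul_comm, hF₂]
      exact hI0.2 s hs (u s) (habs u _ hu s) (v s) ⟨hJv s hs, (habs v _ hv s).2⟩)
  refine ⟨Set.IccExtend zero_le_one u, Set.IccExtend zero_le_one v, ⟨?_, ?_, ?_, ?_⟩,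
    ⟨?_, ?_⟩, ?_⟩
  · exact u.continuous.Icc_extend'.continuousOn
  · exact v.continuous.Icc_extend'.continuousOn
  · rw [supNorm_extend]
    exact le_infOn_extend u a₁ b₁ _ ha₁ hab₁ hb₁ hu
  · rw [supNorm_extend]
    exact le_infOn_extend v a₂ b₂ _ ha₂ hab₂ hb₂ hv
  · intro t ht
    rw [Set.IccExtend_of_mem _ _ ht]
    conv_lhs => rw [← hLu, hL₁]
    refine intervalIntegral.integral_congr (fun s hs => ?_)
    rw [Set.uIcc_of_le zero_le_one] at hs
    simp only [Set.IccExtend_of_mem _ _ hs, hF₁]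
  · intro t ht
    rw [Set.IccExtend_of_mem _ _ ht]
    conv_lhs => rw [← hLv, hL₂]
    refine intervalIntegral.integral_congr (fun s hs => ?_)
    rw [Set.uIcc_of_le zero_le_one] at hs
    simp only [Set.IccExtend_of_mem _ _ hs, hF₂]
  · rw [supNorm_extend, supNorm_extend, lt_max_iff]
    exact hne.imp norm_pos_iff.2 norm_pos_iff.2
end

section
/- (Non-existence, case (1)) Assume that for each i=1,2 one has f_i(t,u₁,u₂) < m_i |u_i| for every t ∈ [0,1] and all (u₁,u₂) ∈ ℝ² with u_i ≠ 0. Then the system (*) has no nontrivial solution in K. -/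
open MeasureTheory Set

lemma core_aux (k : ℝ → ℝ → ℝ) (w g : ℝ → ℝ) (m : ℝ)
    (hk : ContinuousOn (fun p : ℝ × ℝ => k p.1 p.2) (Set.Icc 0 1 ×ˢ Set.Icc 0 1))
    (hw : ContinuousOn w (Set.Icc 0 1)) (hg : ContinuousOn g (Set.Icc 0 1))
    (hg0 : ∀ s ∈ Set.Icc (0:ℝ) 1, 0 ≤ g s)
    (hgz : ∀ s ∈ Set.Icc (0:ℝ) 1, w s = 0 → g s ≤ 0)
    (hgm : ∀ s ∈ Set.Icc (0:ℝ) 1, w s ≠ 0 → g s < m * |w s|)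
    (hmpos : 0 < m)
    (hm : 1 / m = ⨆ t : Set.Icc (0:ℝ) 1, ∫ s in (0:ℝ)..1, |k t.1 s|)
    (hsol : ∀ t ∈ Set.Icc (0:ℝ) 1, w t = ∫ s in (0:ℝ)..1, k t s * g s) :
    supNorm w ≤ 0 := by
  by_contra! hpos
  have hne : (Set.Icc (0:ℝ) 1).Nonempty := ⟨0, by simp⟩
  haveI : Nonempty (Set.Icc (0:ℝ) 1) := hne.to_subtype
  obtain ⟨s0, hs0, hmax⟩ := isCompact_Icc.exists_isMaxOn hne hg
  have hmax' : ∀ s ∈ Set.Icc (0:ℝ) 1, g s ≤ g s0 := fun s hs => hmax hs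
  obtain ⟨B, hB⟩ := isCompact_Icc.exists_bound_of_continuousOn hw
  have hbw : BddAbove (Set.range fun t : Set.Icc (0:ℝ) 1 => |w t.1|) := by
    refine ⟨B, ?_⟩
    rintro _ ⟨t, rfl⟩
    exact hB t.1 t.2
  have hlt : g s0 < m * supNorm w := by
    by_cases h : w s0 = 0
    · exact (hgz s0 hs0 h).trans_lt (mul_pos hmpos hpos)
    · refine (hgm s0 hs0 h).trans_le (mul_le_mul_of_nonneg_left ?_ hmpos.le)
      exact le_ciSup hbw ⟨s0, hs0⟩
  obtain ⟨C, hC⟩ := (isCompact_Icc.prod isCompact_Icc).exists_bound_of_continuousOn hk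
  have hkt : ∀ t ∈ Set.Icc (0:ℝ) 1, ContinuousOn (fun s => k t s) (Set.uIcc 0 1) := by
    intro t ht
    rw [Set.uIcc_of_le zero_le_one]
    exact hk.comp (f := fun s => (t, s)) (by fun_prop) (fun s hs => ⟨ht, hs⟩)
  have hbk : BddAbove (Set.range fun t : Set.Icc (0:ℝ) 1 => ∫ s in (0:ℝ)..1, |k t.1 s|) := by
    refine ⟨C, ?_⟩
    rintro _ ⟨t, rfl⟩
    have := intervalIntegral.integral_mono_on (μ := volume) zero_le_one
      (hkt t.1 t.2).abs.intervalIntegrable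
      (intervalIntegrable_const (c := C)) (fun s hs => hC (t.1, s) ⟨t.2, hs⟩)
    simpa using this
  have hle : supNorm w ≤ g s0 * (1 / m) := by
    refine ciSup_le fun t => ?_
    have hkI := (hkt t.1 t.2)
    have hgI : ContinuousOn g (Set.uIcc 0 1) := by rwa [Set.uIcc_of_le zero_le_one]
    rw [hsol t.1 t.2]
    calc |∫ s in (0:ℝ)..1, k t.1 s * g s|
        ≤ ∫ s in (0:ℝ)..1, |k t.1 s * g s| :=
          intervalIntegral.abs_integral_le_integral_abs zero_le_one
      _ ≤ ∫ s in (0:ℝ)..1, g s0 * |k t.1 s| := by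
          refine intervalIntegral.integral_mono_on zero_le_one
            (hkI.mul hgI).abs.intervalIntegrable
            (continuousOn_const.mul hkI.abs).intervalIntegrable (fun s hs => ?_)
          rw [abs_mul, abs_of_nonneg (hg0 s hs), mul_comm]
          exact mul_le_mul_of_nonneg_right (hmax' s hs) (abs_nonneg _)
      _ = g s0 * ∫ s in (0:ℝ)..1, |k t.1 s| := intervalIntegral.integral_const_mul _ _
      _ ≤ g s0 * (1 / m) := by
          rw [hm]
          exact mul_le_mul_of_nonneg_left (le_ciSup hbk t) (hg0 s0 hs0)
  rw [mul_one_div, le_div_iff₀ hmpos] at hle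
  linarith

lemma zero_aux (h : ℝ → ℝ) (m : ℝ) (hc : Continuous h)
    (hlt : ∀ x, x ≠ 0 → h x < m * |x|) : h 0 ≤ 0 := by
  have h1 : Filter.Tendsto h (nhdsWithin 0 {0}ᶜ) (nhds (h 0)) :=
    hc.continuousAt.tendsto.mono_left nhdsWithin_le_nhds
  have h2 : Filter.Tendsto (fun x : ℝ => m * |x|) (nhdsWithin 0 {0}ᶜ) (nhds (m * |0|)) :=
    (Continuous.tendsto (by fun_prop) 0).mono_left nhdsWithin_le_nhds
  have := le_of_tendsto_of_tendsto h1 h2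
    (by filter_upwards [self_mem_nhdsWithin] with x hx using (hlt x hx).le)
  simpa using this

theorem nonexistence_case1
    (k₁ k₂ : ℝ → ℝ → ℝ) (f₁ f₂ : ℝ → ℝ → ℝ → ℝ) (Φ₁ Φ₂ : ℝ → ℝ)
    (a₁ b₁ c₁ a₂ b₂ c₂ : ℝ)
    (hk₁ : ContinuousOn (fun p : ℝ × ℝ => k₁ p.1 p.2) (Set.Icc 0 1 ×ˢ Set.Icc 0 1))
    (hk₂ : ContinuousOn (fun p : ℝ × ℝ => k₂ p.1 p.2) (Set.Icc 0 1 ×ˢ Set.Icc 0 1))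
    (ha₁ : 0 ≤ a₁) (hab₁ : a₁ ≤ b₁) (hb₁ : b₁ ≤ 1)
    (ha₂ : 0 ≤ a₂) (hab₂ : a₂ ≤ b₂) (hb₂ : b₂ ≤ 1)
    (hc₁ : c₁ ∈ Set.Ioc (0:ℝ) 1) (hc₂ : c₂ ∈ Set.Ioc (0:ℝ) 1)
    (hΦ₁meas : Measurable Φ₁) (hΦ₂meas : Measurable Φ₂)
    (hΦ₁nn : ∀ s ∈ Set.Icc (0:ℝ) 1, 0 ≤ Φ₁ s) (hΦ₂nn : ∀ s ∈ Set.Icc (0:ℝ) 1, 0 ≤ Φ₂ s)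
    (hΦ₁bdd : ∃ C : ℝ, ∀ᵐ s ∂(volume.restrict (Set.Icc (0:ℝ) 1)), |Φ₁ s| ≤ C)
    (hΦ₂bdd : ∃ C : ℝ, ∀ᵐ s ∂(volume.restrict (Set.Icc (0:ℝ) 1)), |Φ₂ s| ≤ C)
    (hΦ₁pos : 0 < ∫ s in a₁..b₁, Φ₁ s) (hΦ₂pos : 0 < ∫ s in a₂..b₂, Φ₂ s)
    (hub₁ : ∀ t ∈ Set.Icc (0:ℝ) 1, ∀ᵐ s ∂(volume.restrict (Set.Icc (0:ℝ) 1)), |k₁ t s| ≤ Φ₁ s)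
    (hub₂ : ∀ t ∈ Set.Icc (0:ℝ) 1, ∀ᵐ s ∂(volume.restrict (Set.Icc (0:ℝ) 1)), |k₂ t s| ≤ Φ₂ s)
    (hlb₁ : ∀ t ∈ Set.Icc a₁ b₁, ∀ᵐ s ∂(volume.restrict (Set.Icc (0:ℝ) 1)), c₁ * Φ₁ s ≤ k₁ t s)
    (hlb₂ : ∀ t ∈ Set.Icc a₂ b₂, ∀ᵐ s ∂(volume.restrict (Set.Icc (0:ℝ) 1)), c₂ * Φ₂ s ≤ k₂ t s)
    (hf₁ : ContinuousOn (fun p : ℝ × ℝ × ℝ => f₁ p.1 p.2.1 p.2.2)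
      (Set.Icc 0 1 ×ˢ (Set.univ : Set (ℝ × ℝ))))
    (hf₂ : ContinuousOn (fun p : ℝ × ℝ × ℝ => f₂ p.1 p.2.1 p.2.2)
      (Set.Icc 0 1 ×ˢ (Set.univ : Set (ℝ × ℝ))))
    (hf₁nn : ∀ t ∈ Set.Icc (0:ℝ) 1, ∀ x y : ℝ, 0 ≤ f₁ t x y)
    (hf₂nn : ∀ t ∈ Set.Icc (0:ℝ) 1, ∀ x y : ℝ, 0 ≤ f₂ t x y)
    (m₁ m₂ M₁ M₂ : ℝ)
    (hm₁pos : 0 < m₁) (hm₂pos : 0 < m₂)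
    (hm₁ : 1 / m₁ = ⨆ t : Set.Icc (0:ℝ) 1, ∫ s in (0:ℝ)..1, |k₁ t.1 s|)
    (hm₂ : 1 / m₂ = ⨆ t : Set.Icc (0:ℝ) 1, ∫ s in (0:ℝ)..1, |k₂ t.1 s|)
    (hM₁pos : 0 < M₁) (hM₂pos : 0 < M₂)
    (hinf₁pos : 0 < ⨅ t : Set.Icc a₁ b₁, ∫ s in a₁..b₁, k₁ t.1 s)
    (hinf₂pos : 0 < ⨅ t : Set.Icc a₂ b₂, ∫ s in a₂..b₂, k₂ t.1 s)
    (hM₁ : 1 / M₁ = ⨅ t : Set.Icc a₁ b₁, ∫ s in a₁..b₁, k₁ t.1 s)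
    (hM₂ : 1 / M₂ = ⨅ t : Set.Icc a₂ b₂, ∫ s in a₂..b₂, k₂ t.1 s)
    (h1 : ∀ t ∈ Set.Icc (0:ℝ) 1, ∀ x y : ℝ, x ≠ 0 → f₁ t x y < m₁ * |x|)
    (h2 : ∀ t ∈ Set.Icc (0:ℝ) 1, ∀ x y : ℝ, y ≠ 0 → f₂ t x y < m₂ * |y|)
    :
    ¬ ∃ u v : ℝ → ℝ, nontrivialSolution k₁ k₂ f₁ f₂ a₁ b₁ c₁ a₂ b₂ c₂ u v := by
  rintro ⟨u, v, ⟨hu, hv, -, -⟩, ⟨hsu, hsv⟩, hpos⟩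
  have hmap : ∀ s ∈ Set.Icc (0:ℝ) 1, (s, u s, v s) ∈
      Set.Icc (0:ℝ) 1 ×ˢ (Set.univ : Set (ℝ × ℝ)) := fun s hs => ⟨hs, trivial⟩
  have hcm : ContinuousOn (fun s => (s, u s, v s)) (Set.Icc 0 1) :=
    continuousOn_id.prodMk (hu.prodMk hv)
  have A : supNorm u ≤ 0 := by
    refine core_aux k₁ u (fun s => f₁ s (u s) (v s)) m₁ hk₁ hu (hf₁.comp hcm hmap)
      (fun s hs => hf₁nn s hs _ _) (fun s hs h => ?_) (fun s hs h => h1 s hs _ _ h)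
      hm₁pos hm₁ hsu
    simp only [h]
    refine zero_aux (fun x => f₁ s x (v s)) m₁ ?_ (fun x hx => h1 s hs _ _ hx)
    exact hf₁.comp_continuous (f := fun x => (s, x, v s)) (by fun_prop) (fun x => ⟨hs, trivial⟩)
  have B : supNorm v ≤ 0 := by
    refine core_aux k₂ v (fun s => f₂ s (u s) (v s)) m₂ hk₂ hv (hf₂.comp hcm hmap)
      (fun s hs => hf₂nn s hs _ _) (fun s hs h => ?_) (fun s hs h => h2 s hs _ _ h)
      hm₂pos hm₂ hsv
    simp only [h]
    refine zero_aux (fun x => f₂ s (u s) x) m₂ ?_ (fun x hx => h2 s hs _ _ hx)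
    exact hf₂.comp_continuous (f := fun x => (s, u s, x)) (by fun_prop) (fun x => ⟨hs, trivial⟩)
  exact absurd hpos (not_lt.mpr (max_le A B))
end

section
/- (Non-existence, case (2)) Assume that for each i=1,2 one has f_i(t,u₁,u₂) > M_i u_i for every t ∈ [a_i,b_i] and all (u₁,u₂) ∈ ℝ² with u_i > 0. Then the system (*) has no nontrivial solution in K. -/
open MeasureTheory Set

lemma le_of_iInf_pos_aux {ι : Type*} (w : ι → ℝ) (h : 0 < ⨅ i, w i) (i : ι) : (⨅ i, w i) ≤ w i := by
  by_cases hb : BddBelow (Set.range w)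
  · exact ciInf_le hb i
  · rw [Real.iInf_of_not_bddBelow hb] at h
    exact absurd h (lt_irrefl _)

lemma core_aux_s10 (k : ℝ → ℝ → ℝ) (g u Φ : ℝ → ℝ) (a b c M : ℝ)
    (hk : ContinuousOn (fun p : ℝ × ℝ => k p.1 p.2) (Set.Icc 0 1 ×ˢ Set.Icc 0 1))
    (ha : 0 ≤ a) (hab : a ≤ b) (hb : b ≤ 1) (hc : c ∈ Set.Ioc (0:ℝ) 1)
    (hΦ : ∀ s ∈ Set.Icc (0:ℝ) 1, 0 ≤ Φ s)
    (hlb : ∀ t ∈ Set.Icc a b, ∀ᵐ s ∂(volume.restrict (Set.Icc (0:ℝ) 1)), c * Φ s ≤ k t s)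
    (hg : ContinuousOn g (Set.Icc 0 1)) (hgnn : ∀ s ∈ Set.Icc (0:ℝ) 1, 0 ≤ g s)
    (hMpos : 0 < M)
    (hM : 1 / M = ⨅ t : Set.Icc a b, ∫ s in a..b, k t.1 s)
    (h : ∀ t ∈ Set.Icc a b, 0 < u t → M * u t < g t)
    (hu : ContinuousOn u (Set.Icc 0 1))
    (hcone : c * supNorm u ≤ infOn a b u)
    (hsol : ∀ t ∈ Set.Icc (0:ℝ) 1, u t = ∫ s in (0:ℝ)..1, k t s * g s)
    (hpos : 0 < supNorm u) : False := by
  have hsub : Set.Icc a b ⊆ Set.Icc 0 1 := Set.Icc_subset_Icc ha hb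
  have hne : (Set.Icc a b).Nonempty := Set.nonempty_Icc.2 hab
  have hinf : 0 < infOn a b u := lt_of_lt_of_le (mul_pos hc.1 hpos) hcone
  have hupos : ∀ t ∈ Set.Icc a b, 0 < u t := fun t ht =>
    lt_of_lt_of_le hinf (le_of_iInf_pos_aux (fun t : Set.Icc a b => u t.1) hinf ⟨t, ht⟩)
  obtain ⟨t0, ht0, hmin⟩ := isCompact_Icc.exists_isMinOn hne (hu.mono hsub)
  obtain ⟨s1, hs1, hgmin⟩ := isCompact_Icc.exists_isMinOn hne (hg.mono hsub)
  have hγ : M * u t0 < g s1 :=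
    lt_of_le_of_lt (mul_le_mul_of_nonneg_left (hmin hs1) hMpos.le) (h s1 hs1 (hupos s1 hs1))
  have hγ0 : 0 < g s1 := lt_trans (mul_pos hMpos (hupos t0 ht0)) hγ
  have hkc : ContinuousOn (fun s => k t0 s) (Set.Icc 0 1) :=
    hk.comp (f := fun s : ℝ => (t0, s)) (by fun_prop) (fun s hs => ⟨hsub ht0, hs⟩)
  have hknn : ∀ᵐ s ∂(volume.restrict (Set.Icc (0:ℝ) 1)), 0 ≤ k t0 s := by
    filter_upwards [hlb t0 ht0, ae_restrict_mem measurableSet_Icc] with s h1 h2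
    exact le_trans (mul_nonneg hc.1.le (hΦ s h2)) h1
  have hI : IntegrableOn (fun s => k t0 s * g s) (Set.Icc 0 1) :=
    (hkc.mul hg).integrableOn_compact isCompact_Icc
  have hIk : IntegrableOn (fun s => k t0 s) (Set.Icc a b) :=
    (hkc.mono hsub).integrableOn_compact isCompact_Icc
  have hinv : 1 / M ≤ ∫ s in a..b, k t0 s := by
    have hp : 0 < ⨅ t : Set.Icc a b, ∫ s in a..b, k t.1 s := hM ▸ (by positivity)
    rw [hM]
    exact le_of_iInf_pos_aux (fun t : Set.Icc a b => ∫ s in a..b, k t.1 s) hp ⟨t0, ht0⟩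
  rw [intervalIntegral.integral_of_le hab, ← integral_Icc_eq_integral_Ioc] at hinv
  have hs := hsol t0 (hsub ht0)
  rw [intervalIntegral.integral_of_le zero_le_one, ← integral_Icc_eq_integral_Ioc] at hs
  have e1 : ∫ s in Set.Icc a b, k t0 s * g s ≤ u t0 := by
    rw [hs]
    refine setIntegral_mono_set hI ?_ (HasSubset.Subset.eventuallyLE hsub)
    filter_upwards [hknn, ae_restrict_mem measurableSet_Icc] with s h1 h2
    exact mul_nonneg h1 (hgnn s h2)
  have e2 : (∫ s in Set.Icc a b, k t0 s) * g s1 ≤ ∫ s in Set.Icc a b, k t0 s * g s := by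
    rw [← integral_mul_const]
    refine integral_mono_ae (hIk.mul_const _) (hI.mono_set hsub) ?_
    filter_upwards [ae_restrict_of_ae_restrict_of_subset hsub hknn,
      ae_restrict_mem measurableSet_Icc] with s h1 h2
    exact mul_le_mul_of_nonneg_left (hgmin h2) h1
  have e3 : 1 / M * g s1 ≤ u t0 :=
    le_trans (mul_le_mul_of_nonneg_right hinv hγ0.le) (e2.trans e1)
  have e4 : g s1 ≤ M * u t0 := by
    rw [one_div, inv_mul_le_iff₀ hMpos] at e3
    exact e3
  linarith

theorem nonexistence_case2
    (k₁ k₂ : ℝ → ℝ → ℝ) (f₁ f₂ : ℝ → ℝ → ℝ → ℝ) (Φ₁ Φ₂ : ℝ → ℝ)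
    (a₁ b₁ c₁ a₂ b₂ c₂ : ℝ)
    (hk₁ : ContinuousOn (fun p : ℝ × ℝ => k₁ p.1 p.2) (Set.Icc 0 1 ×ˢ Set.Icc 0 1))
    (hk₂ : ContinuousOn (fun p : ℝ × ℝ => k₂ p.1 p.2) (Set.Icc 0 1 ×ˢ Set.Icc 0 1))
    (ha₁ : 0 ≤ a₁) (hab₁ : a₁ ≤ b₁) (hb₁ : b₁ ≤ 1)
    (ha₂ : 0 ≤ a₂) (hab₂ : a₂ ≤ b₂) (hb₂ : b₂ ≤ 1)
    (hc₁ : c₁ ∈ Set.Ioc (0:ℝ) 1) (hc₂ : c₂ ∈ Set.Ioc (0:ℝ) 1)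
    (hΦ₁meas : Measurable Φ₁) (hΦ₂meas : Measurable Φ₂)
    (hΦ₁nn : ∀ s ∈ Set.Icc (0:ℝ) 1, 0 ≤ Φ₁ s) (hΦ₂nn : ∀ s ∈ Set.Icc (0:ℝ) 1, 0 ≤ Φ₂ s)
    (hΦ₁bdd : ∃ C : ℝ, ∀ᵐ s ∂(volume.restrict (Set.Icc (0:ℝ) 1)), |Φ₁ s| ≤ C)
    (hΦ₂bdd : ∃ C : ℝ, ∀ᵐ s ∂(volume.restrict (Set.Icc (0:ℝ) 1)), |Φ₂ s| ≤ C)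
    (hΦ₁pos : 0 < ∫ s in a₁..b₁, Φ₁ s) (hΦ₂pos : 0 < ∫ s in a₂..b₂, Φ₂ s)
    (hub₁ : ∀ t ∈ Set.Icc (0:ℝ) 1, ∀ᵐ s ∂(volume.restrict (Set.Icc (0:ℝ) 1)), |k₁ t s| ≤ Φ₁ s)
    (hub₂ : ∀ t ∈ Set.Icc (0:ℝ) 1, ∀ᵐ s ∂(volume.restrict (Set.Icc (0:ℝ) 1)), |k₂ t s| ≤ Φ₂ s)
    (hlb₁ : ∀ t ∈ Set.Icc a₁ b₁, ∀ᵐ s ∂(volume.restrict (Set.Icc (0:ℝ) 1)), c₁ * Φ₁ s ≤ k₁ t s)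
    (hlb₂ : ∀ t ∈ Set.Icc a₂ b₂, ∀ᵐ s ∂(volume.restrict (Set.Icc (0:ℝ) 1)), c₂ * Φ₂ s ≤ k₂ t s)
    (hf₁ : ContinuousOn (fun p : ℝ × ℝ × ℝ => f₁ p.1 p.2.1 p.2.2)
      (Set.Icc 0 1 ×ˢ (Set.univ : Set (ℝ × ℝ))))
    (hf₂ : ContinuousOn (fun p : ℝ × ℝ × ℝ => f₂ p.1 p.2.1 p.2.2)
      (Set.Icc 0 1 ×ˢ (Set.univ : Set (ℝ × ℝ))))
    (hf₁nn : ∀ t ∈ Set.Icc (0:ℝ) 1, ∀ x y : ℝ, 0 ≤ f₁ t x y)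
    (hf₂nn : ∀ t ∈ Set.Icc (0:ℝ) 1, ∀ x y : ℝ, 0 ≤ f₂ t x y)
    (m₁ m₂ M₁ M₂ : ℝ)
    (hm₁pos : 0 < m₁) (hm₂pos : 0 < m₂)
    (hm₁ : 1 / m₁ = ⨆ t : Set.Icc (0:ℝ) 1, ∫ s in (0:ℝ)..1, |k₁ t.1 s|)
    (hm₂ : 1 / m₂ = ⨆ t : Set.Icc (0:ℝ) 1, ∫ s in (0:ℝ)..1, |k₂ t.1 s|)
    (hM₁pos : 0 < M₁) (hM₂pos : 0 < M₂)
    (hinf₁pos : 0 < ⨅ t : Set.Icc a₁ b₁, ∫ s in a₁..b₁, k₁ t.1 s)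
    (hinf₂pos : 0 < ⨅ t : Set.Icc a₂ b₂, ∫ s in a₂..b₂, k₂ t.1 s)
    (hM₁ : 1 / M₁ = ⨅ t : Set.Icc a₁ b₁, ∫ s in a₁..b₁, k₁ t.1 s)
    (hM₂ : 1 / M₂ = ⨅ t : Set.Icc a₂ b₂, ∫ s in a₂..b₂, k₂ t.1 s)
    (h1 : ∀ t ∈ Set.Icc a₁ b₁, ∀ x y : ℝ, 0 < x → M₁ * x < f₁ t x y)
    (h2 : ∀ t ∈ Set.Icc a₂ b₂, ∀ x y : ℝ, 0 < y → M₂ * y < f₂ t x y)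
    :
    ¬ ∃ u v : ℝ → ℝ, nontrivialSolution k₁ k₂ f₁ f₂ a₁ b₁ c₁ a₂ b₂ c₂ u v := by
  rintro ⟨u, v, ⟨hu, hv, hcu, hcv⟩, ⟨hsu, hsv⟩, hpos⟩
  have hmap : ContinuousOn (fun s : ℝ => (s, u s, v s)) (Set.Icc 0 1) :=
    continuousOn_id.prodMk (hu.prodMk hv)
  have hg₁ : ContinuousOn (fun s => f₁ s (u s) (v s)) (Set.Icc 0 1) :=
    hf₁.comp hmap (fun s hs => ⟨hs, Set.mem_univ _⟩)
  have hg₂ : ContinuousOn (fun s => f₂ s (u s) (v s)) (Set.Icc 0 1) :=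
    hf₂.comp hmap (fun s hs => ⟨hs, Set.mem_univ _⟩)
  rcases lt_max_iff.1 hpos with hp | hp
  · exact core_aux_s10 k₁ _ u Φ₁ a₁ b₁ c₁ M₁ hk₁ ha₁ hab₁ hb₁ hc₁ hΦ₁nn hlb₁ hg₁
      (fun s hs => hf₁nn s hs _ _) hM₁pos hM₁ (fun t ht h => h1 t ht _ _ h) hu hcu hsu hp
  · exact core_aux_s10 k₂ _ v Φ₂ a₂ b₂ c₂ M₂ hk₂ ha₂ hab₂ hb₂ hc₂ hΦ₂nn hlb₂ hg₂
      (fun s hs => hf₂nn s hs _ _) hM₂pos hM₂ (fun t ht h => h2 t ht _ _ h) hv hcv hsv hp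
end

section
/- (Non-existence, case (3)) Assume that for some i ∈ {1,2} one has f_i(t,u₁,u₂) < m_i |u_i| for every t ∈ [0,1] and all (u₁,u₂) ∈ ℝ² with u_i ≠ 0, and for j ∈ {1,2}, j ≠ i, one has f_j(t,u₁,u₂) > M_j u_j for every t ∈ [a_j,b_j] and all (u₁,u₂) ∈ ℝ² with u_j > 0. Then the system (*) has no nontrivial solution in K. -/
open MeasureTheory Set

lemma aux_int_cont (k : ℝ → ℝ → ℝ)
    (hk : ContinuousOn (fun p : ℝ × ℝ => k p.1 p.2) (Set.Icc 0 1 ×ˢ Set.Icc 0 1))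
    (t : ℝ) (ht : t ∈ Set.Icc (0:ℝ) 1) : ContinuousOn (fun s => k t s) (Set.Icc 0 1) :=
  hk.comp (f := fun s : ℝ => (t, s)) (by fun_prop) (fun s hs => ⟨ht, hs⟩)

lemma aux_upper (k : ℝ → ℝ → ℝ) (g u : ℝ → ℝ) (m : ℝ)
    (hk : ContinuousOn (fun p : ℝ × ℝ => k p.1 p.2) (Set.Icc 0 1 ×ˢ Set.Icc 0 1))
    (hg : ContinuousOn g (Set.Icc 0 1)) (hu : ContinuousOn u (Set.Icc 0 1))
    (hg0 : ∀ s ∈ Set.Icc (0:ℝ) 1, 0 ≤ g s)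
    (hm : 0 < m) (hmk : 1 / m = ⨆ t : Set.Icc (0:ℝ) 1, ∫ s in (0:ℝ)..1, |k t.1 s|)
    (hsol : ∀ t ∈ Set.Icc (0:ℝ) 1, u t = ∫ s in (0:ℝ)..1, k t s * g s)
    (h1 : ∀ s ∈ Set.Icc (0:ℝ) 1, u s ≠ 0 → g s < m * |u s|)
    (h2 : ∀ s ∈ Set.Icc (0:ℝ) 1, u s = 0 → g s ≤ 0) : ∀ s ∈ Set.Icc (0:ℝ) 1, u s = 0 := by
  have hne : (Set.Icc (0:ℝ) 1).Nonempty := ⟨0, by simp⟩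
  obtain ⟨t, ht, htmax⟩ := isCompact_Icc.exists_isMaxOn hne hu.abs
  obtain ⟨r, hr, hrmax⟩ := isCompact_Icc.exists_isMaxOn hne hg
  by_contra hcon
  push Not at hcon
  obtain ⟨s0, hs0, hs0'⟩ := hcon
  have hpos : 0 < |u t| := lt_of_lt_of_le (abs_pos.mpr hs0') (htmax hs0)
  have hgr : g r < m * |u t| := by
    by_cases h0 : u r = 0
    · exact lt_of_le_of_lt (h2 r hr h0) (by positivity)
    · exact lt_of_lt_of_le (h1 r hr h0) (mul_le_mul_of_nonneg_left (htmax hr) hm.le)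
  have hbdd : BddAbove (Set.range fun t : Set.Icc (0:ℝ) 1 => ∫ s in (0:ℝ)..1, |k t.1 s|) := by
    by_contra hb
    rw [Real.iSup_of_not_bddAbove hb] at hmk
    have : 0 < 1 / m := by positivity
    linarith
  have hkt : ∫ s in (0:ℝ)..1, |k t s| ≤ 1 / m := by
    rw [hmk]; exact le_ciSup hbdd ⟨t, ht⟩
  have hkc := aux_int_cont k hk t ht
  have hle : |u t| ≤ ∫ s in (0:ℝ)..1, |k t s| * g r := by
    rw [hsol t ht]
    refine (intervalIntegral.abs_integral_le_integral_abs zero_le_one).trans ?_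
    apply intervalIntegral.integral_mono_on zero_le_one
    · apply ContinuousOn.intervalIntegrable
      rw [Set.uIcc_of_le zero_le_one]
      exact (hkc.mul hg).abs
    · apply ContinuousOn.intervalIntegrable
      rw [Set.uIcc_of_le zero_le_one]
      exact hkc.abs.mul continuousOn_const
    · intro s hs
      rw [abs_mul, abs_of_nonneg (hg0 s hs)]
      exact mul_le_mul_of_nonneg_left (hrmax hs) (abs_nonneg _)
  rw [intervalIntegral.integral_mul_const] at hle
  have h3 : |u t| ≤ 1 / m * g r := hle.trans (mul_le_mul_of_nonneg_right hkt (hg0 r hr))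
  have h4 : 1 / m * g r < 1 / m * (m * |u t|) := mul_lt_mul_of_pos_left hgr (by positivity)
  have h5 : 1 / m * (m * |u t|) = |u t| := by field_simp
  linarith

lemma aux_zero (u : ℝ → ℝ) (h : ∀ s ∈ Set.Icc (0:ℝ) 1, u s = 0) : supNorm u = 0 := by
  unfold supNorm
  have : ∀ t : Set.Icc (0:ℝ) 1, |u t.1| = 0 := fun t => by rw [h t.1 t.2, abs_zero]
  simp [this]

lemma aux_lower (k : ℝ → ℝ → ℝ) (g v Φ : ℝ → ℝ) (M a b c : ℝ)
    (hk : ContinuousOn (fun p : ℝ × ℝ => k p.1 p.2) (Set.Icc 0 1 ×ˢ Set.Icc 0 1))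
    (ha : 0 ≤ a) (hab : a ≤ b) (hb : b ≤ 1) (hc : 0 < c)
    (hΦ : ∀ s ∈ Set.Icc (0:ℝ) 1, 0 ≤ Φ s)
    (hlb : ∀ t ∈ Set.Icc a b, ∀ᵐ s ∂(volume.restrict (Set.Icc (0:ℝ) 1)), c * Φ s ≤ k t s)
    (hg : ContinuousOn g (Set.Icc 0 1)) (hv : ContinuousOn v (Set.Icc 0 1))
    (hg0 : ∀ s ∈ Set.Icc (0:ℝ) 1, 0 ≤ g s)
    (hM : 0 < M) (hMk : 1 / M = ⨅ t : Set.Icc a b, ∫ s in a..b, k t.1 s)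
    (hsol : ∀ t ∈ Set.Icc (0:ℝ) 1, v t = ∫ s in (0:ℝ)..1, k t s * g s)
    (hcone : c * supNorm v ≤ infOn a b v) (hpos : 0 < supNorm v)
    (h1 : ∀ s ∈ Set.Icc a b, 0 < v s → M * v s < g s) : False := by
  have hsub : Set.Icc a b ⊆ Set.Icc (0:ℝ) 1 := Set.Icc_subset_Icc ha hb
  have hne : (Set.Icc a b).Nonempty := ⟨a, le_refl _, hab⟩
  obtain ⟨t, ht, htmin⟩ := isCompact_Icc.exists_isMinOn hne (hv.mono hsub)
  obtain ⟨r, hr, hrmin⟩ := isCompact_Icc.exists_isMinOn hne (hg.mono hsub)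
  have hvt : 0 < v t := by
    have h2 : infOn a b v ≤ v t :=
      ciInf_le (f := fun t : Set.Icc a b => v t.1)
        ⟨v t, by rintro _ ⟨s, rfl⟩; exact htmin s.2⟩ ⟨t, ht⟩
    have : 0 < c * supNorm v := by positivity
    linarith
  have hgr : M * v t < g r :=
    lt_of_le_of_lt (mul_le_mul_of_nonneg_left (htmin hr) hM.le)
      (h1 r hr (lt_of_lt_of_le hvt (htmin hr)))
  have hbdd : BddBelow (Set.range fun t : Set.Icc a b => ∫ s in a..b, k t.1 s) := by
    by_contra hb
    rw [Real.iInf_of_not_bddBelow hb] at hMk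
    have : 0 < 1 / M := by positivity
    linarith
  have hkt : 1 / M ≤ ∫ s in a..b, k t s := by
    rw [hMk]; exact ciInf_le hbdd ⟨t, ht⟩
  have hkc := aux_int_cont k hk t (hsub ht)
  have hk0 : ∀ᵐ s ∂(volume.restrict (Set.Icc (0:ℝ) 1)), 0 ≤ k t s := by
    filter_upwards [hlb t ht, ae_restrict_mem measurableSet_Icc] with s h1 h2
    exact (mul_nonneg hc.le (hΦ s h2)).trans h1
  have hint : IntegrableOn (fun s => k t s * g s) (Set.Icc 0 1) :=
    (hkc.mul hg).integrableOn_Icc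
  have hle : ∫ s in a..b, k t s * g r ≤ v t := by
    rw [hsol t (hsub ht), intervalIntegral.integral_of_le hab,
      intervalIntegral.integral_of_le zero_le_one, ← integral_Icc_eq_integral_Ioc,
      ← integral_Icc_eq_integral_Ioc]
    calc ∫ s in Set.Icc a b, k t s * g r ≤ ∫ s in Set.Icc a b, k t s * g s := by
          apply setIntegral_mono_ae_restrict
          · exact ((hkc.mono hsub).mul continuousOn_const).integrableOn_Icc
          · exact hint.mono_set hsub
          · filter_upwards [ae_restrict_of_ae_restrict_of_subset hsub hk0,
              ae_restrict_mem measurableSet_Icc] with s h1 h2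
            exact mul_le_mul_of_nonneg_left (hrmin h2) h1
      _ ≤ ∫ s in Set.Icc (0:ℝ) 1, k t s * g s := by
          apply setIntegral_mono_set hint
          · filter_upwards [hk0, ae_restrict_mem measurableSet_Icc] with s h1 h2
            exact mul_nonneg h1 (hg0 s h2)
          · exact hsub.eventuallyLE
  rw [intervalIntegral.integral_mul_const] at hle
  have h3 : 1 / M * g r ≤ v t := (mul_le_mul_of_nonneg_right hkt (hg0 r (hsub hr))).trans hle
  have h4 : 1 / M * (M * v t) < 1 / M * g r := mul_lt_mul_of_pos_left hgr (by positivity)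
  have h5 : 1 / M * (M * v t) = v t := by field_simp
  linarith

lemma aux_limit (φ : ℝ → ℝ) (m : ℝ) (hφ : Continuous φ) (h : ∀ x, x ≠ 0 → φ x < m * |x|) :
    φ 0 ≤ 0 := by
  have hd : Dense ({0}ᶜ : Set ℝ) := dense_compl_singleton 0
  have hcl : IsClosed {x : ℝ | φ x ≤ m * |x|} := isClosed_le hφ (by fun_prop)
  have : (0:ℝ) ∈ closure {x : ℝ | φ x ≤ m * |x|} :=
    closure_mono (fun x hx => (h x hx).le) (hd 0)
  rw [hcl.closure_eq] at this
  simpa using this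

theorem nonexistence_case3
    (k₁ k₂ : ℝ → ℝ → ℝ) (f₁ f₂ : ℝ → ℝ → ℝ → ℝ) (Φ₁ Φ₂ : ℝ → ℝ)
    (a₁ b₁ c₁ a₂ b₂ c₂ : ℝ)
    (hk₁ : ContinuousOn (fun p : ℝ × ℝ => k₁ p.1 p.2) (Set.Icc 0 1 ×ˢ Set.Icc 0 1))
    (hk₂ : ContinuousOn (fun p : ℝ × ℝ => k₂ p.1 p.2) (Set.Icc 0 1 ×ˢ Set.Icc 0 1))
    (ha₁ : 0 ≤ a₁) (hab₁ : a₁ ≤ b₁) (hb₁ : b₁ ≤ 1)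
    (ha₂ : 0 ≤ a₂) (hab₂ : a₂ ≤ b₂) (hb₂ : b₂ ≤ 1)
    (hc₁ : c₁ ∈ Set.Ioc (0:ℝ) 1) (hc₂ : c₂ ∈ Set.Ioc (0:ℝ) 1)
    (hΦ₁meas : Measurable Φ₁) (hΦ₂meas : Measurable Φ₂)
    (hΦ₁nn : ∀ s ∈ Set.Icc (0:ℝ) 1, 0 ≤ Φ₁ s) (hΦ₂nn : ∀ s ∈ Set.Icc (0:ℝ) 1, 0 ≤ Φ₂ s)
    (hΦ₁bdd : ∃ C : ℝ, ∀ᵐ s ∂(volume.restrict (Set.Icc (0:ℝ) 1)), |Φ₁ s| ≤ C)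
    (hΦ₂bdd : ∃ C : ℝ, ∀ᵐ s ∂(volume.restrict (Set.Icc (0:ℝ) 1)), |Φ₂ s| ≤ C)
    (hΦ₁pos : 0 < ∫ s in a₁..b₁, Φ₁ s) (hΦ₂pos : 0 < ∫ s in a₂..b₂, Φ₂ s)
    (hub₁ : ∀ t ∈ Set.Icc (0:ℝ) 1, ∀ᵐ s ∂(volume.restrict (Set.Icc (0:ℝ) 1)), |k₁ t s| ≤ Φ₁ s)
    (hub₂ : ∀ t ∈ Set.Icc (0:ℝ) 1, ∀ᵐ s ∂(volume.restrict (Set.Icc (0:ℝ) 1)), |k₂ t s| ≤ Φ₂ s)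
    (hlb₁ : ∀ t ∈ Set.Icc a₁ b₁, ∀ᵐ s ∂(volume.restrict (Set.Icc (0:ℝ) 1)), c₁ * Φ₁ s ≤ k₁ t s)
    (hlb₂ : ∀ t ∈ Set.Icc a₂ b₂, ∀ᵐ s ∂(volume.restrict (Set.Icc (0:ℝ) 1)), c₂ * Φ₂ s ≤ k₂ t s)
    (hf₁ : ContinuousOn (fun p : ℝ × ℝ × ℝ => f₁ p.1 p.2.1 p.2.2)
      (Set.Icc 0 1 ×ˢ (Set.univ : Set (ℝ × ℝ))))
    (hf₂ : ContinuousOn (fun p : ℝ × ℝ × ℝ => f₂ p.1 p.2.1 p.2.2)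
      (Set.Icc 0 1 ×ˢ (Set.univ : Set (ℝ × ℝ))))
    (hf₁nn : ∀ t ∈ Set.Icc (0:ℝ) 1, ∀ x y : ℝ, 0 ≤ f₁ t x y)
    (hf₂nn : ∀ t ∈ Set.Icc (0:ℝ) 1, ∀ x y : ℝ, 0 ≤ f₂ t x y)
    (m₁ m₂ M₁ M₂ : ℝ)
    (hm₁pos : 0 < m₁) (hm₂pos : 0 < m₂)
    (hm₁ : 1 / m₁ = ⨆ t : Set.Icc (0:ℝ) 1, ∫ s in (0:ℝ)..1, |k₁ t.1 s|)
    (hm₂ : 1 / m₂ = ⨆ t : Set.Icc (0:ℝ) 1, ∫ s in (0:ℝ)..1, |k₂ t.1 s|)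
    (hM₁pos : 0 < M₁) (hM₂pos : 0 < M₂)
    (hinf₁pos : 0 < ⨅ t : Set.Icc a₁ b₁, ∫ s in a₁..b₁, k₁ t.1 s)
    (hinf₂pos : 0 < ⨅ t : Set.Icc a₂ b₂, ∫ s in a₂..b₂, k₂ t.1 s)
    (hM₁ : 1 / M₁ = ⨅ t : Set.Icc a₁ b₁, ∫ s in a₁..b₁, k₁ t.1 s)
    (hM₂ : 1 / M₂ = ⨅ t : Set.Icc a₂ b₂, ∫ s in a₂..b₂, k₂ t.1 s)
    (h : ((∀ t ∈ Set.Icc (0:ℝ) 1, ∀ x y : ℝ, x ≠ 0 → f₁ t x y < m₁ * |x|) ∧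
          (∀ t ∈ Set.Icc a₂ b₂, ∀ x y : ℝ, 0 < y → M₂ * y < f₂ t x y)) ∨
         ((∀ t ∈ Set.Icc (0:ℝ) 1, ∀ x y : ℝ, y ≠ 0 → f₂ t x y < m₂ * |y|) ∧
          (∀ t ∈ Set.Icc a₁ b₁, ∀ x y : ℝ, 0 < x → M₁ * x < f₁ t x y)))
    :
    ¬ ∃ u v : ℝ → ℝ, nontrivialSolution k₁ k₂ f₁ f₂ a₁ b₁ c₁ a₂ b₂ c₂ u v := by
  rintro ⟨u, v, ⟨hu, hv, hcu, hcv⟩, ⟨hsu, hsv⟩, hpos⟩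
  have hg₁ : ContinuousOn (fun s => f₁ s (u s) (v s)) (Set.Icc 0 1) :=
    hf₁.comp (f := fun s : ℝ => (s, u s, v s)) (continuousOn_id.prodMk (hu.prodMk hv))
      (fun s hs => ⟨hs, Set.mem_univ _⟩)
  have hg₂ : ContinuousOn (fun s => f₂ s (u s) (v s)) (Set.Icc 0 1) :=
    hf₂.comp (f := fun s : ℝ => (s, u s, v s)) (continuousOn_id.prodMk (hu.prodMk hv))
      (fun s hs => ⟨hs, Set.mem_univ _⟩)
  rcases h with ⟨hA, hB⟩ | ⟨hA, hB⟩
  · have hz := aux_zero u (aux_upper k₁ _ u m₁ hk₁ hg₁ hu (fun s hs => hf₁nn s hs _ _) hm₁pos hm₁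
      hsu (fun s hs h0 => hA s hs _ _ h0) (fun s hs h0 => by
        have hc : Continuous (fun x => f₁ s x (v s)) :=
          hf₁.comp_continuous (f := fun x : ℝ => (s, x, v s)) (by fun_prop)
            (fun x => ⟨hs, Set.mem_univ _⟩)
        simpa [h0] using aux_limit _ m₁ hc (fun x hx => hA s hs x _ hx)))
    have hp : 0 < supNorm v := by
      rcases lt_max_iff.mp hpos with h | h
      · linarith
      · exact h
    exact aux_lower k₂ _ v Φ₂ M₂ a₂ b₂ c₂ hk₂ ha₂ hab₂ hb₂ hc₂.1 hΦ₂nn hlb₂ hg₂ hv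
      (fun s hs => hf₂nn s hs _ _) hM₂pos hM₂ hsv hcv hp (fun s hs h0 => hB s hs _ _ h0)
  · have hz := aux_zero v (aux_upper k₂ _ v m₂ hk₂ hg₂ hv (fun s hs => hf₂nn s hs _ _) hm₂pos hm₂
      hsv (fun s hs h0 => hA s hs _ _ h0) (fun s hs h0 => by
        have hc : Continuous (fun y => f₂ s (u s) y) :=
          hf₂.comp_continuous (f := fun y : ℝ => (s, u s, y)) (by fun_prop)
            (fun x => ⟨hs, Set.mem_univ _⟩)
        simpa [h0] using aux_limit _ m₂ hc (fun y hy => hA s hs _ y hy)))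
    have hp : 0 < supNorm u := by
      rcases lt_max_iff.mp hpos with h | h
      · exact h
      · linarith
    exact aux_lower k₁ _ u Φ₁ M₁ a₁ b₁ c₁ hk₁ ha₁ hab₁ hb₁ hc₁.1 hΦ₁nn hlb₁ hg₁ hu
      (fun s hs => hf₁nn s hs _ _) hM₁pos hM₁ hsu hcu hp (fun s hs h0 => hB s hs _ _ h0)
end

section
/- Let 1 < α ≤ 2, β > 0, 0 ≤ η ≤ 1 with βΓ(α) < (1−η)^{α−1}, and let b satisfy η ≤ b < 1 and βΓ(α) > (b−η)^{α−1}. Define k(t,s) = β + 1_{{s≤η}}(η−s)^{α−1}/Γ(α) − 1_{{s≤t}}(t−s)^{α−1}/Γ(α), Φ(s) = (1−η)^{α−1}/Γ(α) − β for s > η, Φ(s) = β + (η−s)^{α−1}/Γ(α) for s ≤ η, and c = min{ (βΓ(α) − (b−η)^{α−1})/((1−η)^{α−1} − βΓ(α)), (βΓ(α) − (b−η)^{α−1})/(βΓ(α) + η^{α−1}) }. Then c ∈ (0,1] and k(t,s) ≥ c·Φ(s) for all t ∈ [0,b] and almost every s ∈ [0,1]. -/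
open MeasureTheory Set Real

theorem kernel_lower_bound (α β η b c : ℝ) (hα1 : 1 < α) (hα2 : α ≤ 2) (hβ : 0 < β)
    (hη : η ∈ Set.Icc (0:ℝ) 1) (hβη : β * Real.Gamma α < (1 - η) ^ (α - 1))
    (hηb : η ≤ b) (hb1 : b < 1) (hβb : (b - η) ^ (α - 1) < β * Real.Gamma α)
    (k : ℝ → ℝ → ℝ) (Φ : ℝ → ℝ)
    (hk : ∀ t s : ℝ, k t s =
      β + (if s ≤ η then (η - s) ^ (α - 1) / Real.Gamma α else 0) -
        (if s ≤ t then (t - s) ^ (α - 1) / Real.Gamma α else 0))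
    (hΦ : ∀ s : ℝ, Φ s =
      if s ≤ η then β + (η - s) ^ (α - 1) / Real.Gamma α
      else (1 - η) ^ (α - 1) / Real.Gamma α - β)
    (hc : c = min
      ((β * Real.Gamma α - (b - η) ^ (α - 1)) / ((1 - η) ^ (α - 1) - β * Real.Gamma α))
      ((β * Real.Gamma α - (b - η) ^ (α - 1)) / (β * Real.Gamma α + η ^ (α - 1)))) :
    (0 < c ∧ c ≤ 1) ∧
      ∀ t ∈ Set.Icc (0:ℝ) b,
        ∀ᵐ s ∂(volume.restrict (Set.Icc (0:ℝ) 1)), c * Φ s ≤ k t s := by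
  have hp0 : 0 < α - 1 := by linarith
  have hp1 : α - 1 ≤ 1 := by linarith
  have hG : 0 < Real.Gamma α := Real.Gamma_pos_of_pos (by linarith)
  obtain ⟨hη0, hη1⟩ := hη
  have hηp : 0 ≤ η ^ (α - 1) := Real.rpow_nonneg hη0 _
  have hD : 0 ≤ (b - η) ^ (α - 1) := Real.rpow_nonneg (by linarith) _
  have hA : 0 < β * Real.Gamma α := mul_pos hβ hG
  have h1 : 0 < (1 - η) ^ (α - 1) - β * Real.Gamma α := by linarith
  have h2 : 0 < β * Real.Gamma α + η ^ (α - 1) := by linarith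
  have h3 : 0 < β * Real.Gamma α - (b - η) ^ (α - 1) := by linarith
  have hc0 : 0 < c := by
    rw [hc]; exact lt_min (div_pos h3 h1) (div_pos h3 h2)
  have hc1 : c * ((1 - η) ^ (α - 1) - β * Real.Gamma α)
      ≤ β * Real.Gamma α - (b - η) ^ (α - 1) := by
    rw [← le_div_iff₀ h1, hc]; exact min_le_left _ _
  have hc2 : c * (β * Real.Gamma α + η ^ (α - 1))
      ≤ β * Real.Gamma α - (b - η) ^ (α - 1) := by
    rw [← le_div_iff₀ h2, hc]; exact min_le_right _ _
  refine ⟨⟨hc0, ?_⟩, ?_⟩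
  · rw [hc]
    refine (min_le_right _ _).trans ?_
    rw [div_le_one h2]; linarith
  rintro t ⟨ht0, htb⟩
  filter_upwards [ae_restrict_mem measurableSet_Icc] with s hs
  obtain ⟨hs0, hs1⟩ := hs
  rw [hk, hΦ]
  refine le_of_mul_le_mul_right ?_ hG
  by_cases hsη : s ≤ η
  · rw [if_pos hsη, if_pos hsη]
    have e1 : (η - s) ^ (α - 1) ≤ η ^ (α - 1) :=
      Real.rpow_le_rpow (by linarith) (by linarith) hp0.le
    have e0 : 0 ≤ (η - s) ^ (α - 1) := Real.rpow_nonneg (by linarith) _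
    have e2 : c * (β * Real.Gamma α + (η - s) ^ (α - 1))
        ≤ β * Real.Gamma α - (b - η) ^ (α - 1) :=
      (mul_le_mul_of_nonneg_left (by linarith) hc0.le).trans hc2
    have e3 : c * (β + (η - s) ^ (α - 1) / Real.Gamma α) * Real.Gamma α
        = c * (β * Real.Gamma α + (η - s) ^ (α - 1)) := by field_simp
    rw [e3]
    refine e2.trans ?_
    split_ifs with hst
    · have e4 : (t - s) ^ (α - 1) ≤ (b - η) ^ (α - 1) + (η - s) ^ (α - 1) :=
        (Real.rpow_le_rpow (by linarith) (by linarith) hp0.le).trans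
          (Real.rpow_add_le_add_rpow (by linarith : 0 ≤ b - η) (by linarith : 0 ≤ η - s)
            hp0.le hp1)
      have e5 : (β + (η - s) ^ (α - 1) / Real.Gamma α - (t - s) ^ (α - 1) / Real.Gamma α)
          * Real.Gamma α = β * Real.Gamma α + (η - s) ^ (α - 1) - (t - s) ^ (α - 1) := by
        field_simp
      rw [e5]; linarith
    · have e5 : (β + (η - s) ^ (α - 1) / Real.Gamma α - 0)
          * Real.Gamma α = β * Real.Gamma α + (η - s) ^ (α - 1) := by
        field_simp; ring
      rw [e5]; linarith
  · rw [if_neg hsη, if_neg hsη]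
    have hsη' := not_le.mp hsη
    have e3 : c * ((1 - η) ^ (α - 1) / Real.Gamma α - β) * Real.Gamma α
        = c * ((1 - η) ^ (α - 1) - β * Real.Gamma α) := by field_simp
    rw [e3]
    refine hc1.trans ?_
    split_ifs with hst
    · have e4 : (t - s) ^ (α - 1) ≤ (b - η) ^ (α - 1) :=
        Real.rpow_le_rpow (by linarith) (by linarith) hp0.le
      have e5 : (β + 0 - (t - s) ^ (α - 1) / Real.Gamma α)
          * Real.Gamma α = β * Real.Gamma α - (t - s) ^ (α - 1) := by
        field_simp; ring
      rw [e5]; linarith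
    · rw [add_zero, sub_zero]; linarith
end
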